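/- arXiv:2101.06183 — 4 statements merged into one kernel-verified Lean document; each statement's English description precedes it below -/
import Mathlib

section
/- Let α ∈ (0,1], β > 0 and let γ be a positive integer. Then, as u → ∞, E^{γ+1}_{α,β}(u) = e^{u^{1/α}} u^{(γ+1−β)/α} / (α^{γ+1} γ!) · (1 + O(u^{−1/α})); equivalently, the function u ↦ α^{γ+1} γ! e^{−u^{1/α}} u^{−(γ+1−β)/α} E^{γ+1}_{α,β}(u) − 1 is O(u^{−1/α}) as u → ∞. -/
open Filter Topology

/-- The Prabhakar (three-parameter Mittag-Leffler) function
`E^γ_{α,β}(u) = ∑_{k≥0} u^k (γ)_k / (k! Γ(αk+β))`. -/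
noncomputable def prabhakar (α β γ : ℝ) (u : ℝ) : ℝ :=
  ∑' k : ℕ, u ^ k * Polynomial.eval γ (ascPochhammer ℝ k)
    / ((k.factorial : ℝ) * Real.Gamma (α * (k : ℝ) + β))

section PrabhakarAux
open Filter Topology Asymptotics MeasureTheory Set

lemma gamma_lower {y X : ℝ} (hy : 1 ≤ y) (hX : 0 ≤ X) :
    X ^ (y - 1) * Real.exp (-X) ≤ Real.Gamma y := by
  rw [Real.Gamma_eq_integral (by linarith)]
  have hint := Real.GammaIntegral_convergent (s := y) (by linarith)
  calc X ^ (y - 1) * Real.exp (-X) = ∫ t in Ioi X, X ^ (y - 1) * Real.exp (-t) := by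
        rw [integral_const_mul, integral_exp_neg_Ioi]
    _ ≤ ∫ t in Ioi X, Real.exp (-t) * t ^ (y - 1) := by
        apply setIntegral_mono_on
        · exact (integrableOn_exp_neg_Ioi X).const_mul _
        · exact hint.mono_set (Ioi_subset_Ioi hX)
        · exact measurableSet_Ioi
        · intro t ht
          rw [mul_comm]
          have : X ^ (y-1) ≤ t ^ (y-1) := Real.rpow_le_rpow hX (le_of_lt ht) (by linarith)
          gcongr
    _ ≤ ∫ t in Ioi 0, Real.exp (-t) * t ^ (y - 1) := by
        apply setIntegral_mono_set hint
        · filter_upwards [ae_restrict_mem measurableSet_Ioi] with t ht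
          have : (0:ℝ) < t := ht
          simp only [Pi.zero_apply]
          positivity
        · exact (Ioi_subset_Ioi hX).eventuallyLE

lemma term_bound {y x : ℝ} (hy : 1 ≤ y) (hx : 0 ≤ x) :
    x ^ (y - 1) / Real.Gamma y ≤ (2/3 : ℝ) ^ (y - 1) * Real.exp (3/2 * x) := by
  have hG : 0 < Real.Gamma y := Real.Gamma_pos_of_pos (by linarith)
  rw [div_le_iff₀ hG]
  have h := gamma_lower (X := 3/2 * x) hy (by positivity)
  rw [Real.mul_rpow (by norm_num) hx] at h
  have h1 : (2/3 : ℝ) ^ (y - 1) * (3/2 : ℝ) ^ (y - 1) = 1 := by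
    rw [← Real.mul_rpow (by norm_num) (by norm_num)]; norm_num
  calc x ^ (y - 1) = ((2/3 : ℝ) ^ (y - 1) * (3/2 : ℝ) ^ (y - 1)) * (Real.exp (3/2 * x) * Real.exp (-(3/2*x))) * x ^ (y-1) := by
        rw [h1, ← Real.exp_add]; simp
    _ = (2/3 : ℝ) ^ (y - 1) * Real.exp (3/2 * x) * ((3/2 : ℝ) ^ (y - 1) * x ^ (y-1) * Real.exp (-(3/2*x))) := by ring
    _ ≤ _ := by gcongr

lemma gamma_laplace {a : ℝ} (ha : 0 < a) {s : ℂ} (hs : 0 < s.re) :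
    ∫ t in Ioi (0:ℝ), Complex.exp (-(s * t)) * ((t ^ (a - 1) : ℝ) : ℂ) =
      s ^ (-(a:ℂ)) * (Real.Gamma a : ℂ) := by
  set μ : Measure ℝ := (volume.restrict (Ioi 0)).withDensity (fun x => ENNReal.ofReal (x^(a-1))) with hμ
  have hmeas : Measurable (fun x : ℝ => ENNReal.ofReal (x^(a-1))) := by fun_prop
  have hnn : ∀ᵐ t ∂(volume.restrict (Ioi (0:ℝ))), (ENNReal.ofReal (t^(a-1))).toReal = t^(a-1) := by
    filter_upwards [ae_restrict_mem measurableSet_Ioi] with t ht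
    have : (0:ℝ) < t := ht
    rw [ENNReal.toReal_ofReal (by positivity)]
  have hmgf : ∀ z : ℂ, ProbabilityTheory.complexMGF (fun x : ℝ => -x) μ z =
      ∫ t in Ioi (0:ℝ), Complex.exp (-(z * t)) * ((t ^ (a - 1) : ℝ) : ℂ) := by
    intro z
    rw [ProbabilityTheory.complexMGF, hμ, integral_withDensity_eq_integral_toReal_smul hmeas (by simp)]
    apply integral_congr_ae
    filter_upwards [hnn] with t ht
    simp only [ht, Complex.real_smul]
    rw [mul_comm]; push_cast; simp
  have hset : Ioi (0:ℝ) ⊆ interior (ProbabilityTheory.integrableExpSet (fun x : ℝ => -x) μ) := by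
    apply interior_maximal _ isOpen_Ioi
    intro r hr
    have hr : (0:ℝ) < r := hr
    simp only [ProbabilityTheory.integrableExpSet, mem_ofPred_eq]
    rw [hμ, integrable_withDensity_iff_integrable_smul' hmeas (by simp)]
    have h := integrableOn_rpow_mul_exp_neg_mul_rpow (s := a - 1) (p := 1) (b := r) (by linarith) one_pos hr
    refine Integrable.congr h ?_
    filter_upwards [hnn] with t ht
    simp [ht]
  have hU : IsPreconnected {z : ℂ | 0 < z.re} := (convex_halfSpace_re_gt 0).isPreconnected
  have hA : AnalyticOnNhd ℂ (ProbabilityTheory.complexMGF (fun x : ℝ => -x) μ) {z : ℂ | 0 < z.re} := by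
    intro z hz
    exact ProbabilityTheory.analyticAt_complexMGF (hset hz)
  have hopen : IsOpen {z : ℂ | 0 < z.re} := isOpen_lt continuous_const Complex.continuous_re
  have hB : AnalyticOnNhd ℂ (fun z : ℂ => z ^ (-(a:ℂ)) * (Real.Gamma a : ℂ)) {z : ℂ | 0 < z.re} := by
    apply DifferentiableOn.analyticOnNhd _ hopen
    intro z hz
    have : z ∈ Complex.slitPlane := Or.inl hz
    exact ((differentiableAt_id.cpow_const this).mul_const _).differentiableWithinAt
  have key := hA.eqOn_of_preconnected_of_frequently_eq hB hU (z₀ := 1) (by simp) ?_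
  · rw [← hmgf]; exact key hs
  have ht : Tendsto (fun r : ℝ => (r : ℂ)) (𝓝[≠] 1) (𝓝[≠] 1) := by
    apply tendsto_nhdsWithin_of_tendsto_nhds_of_eventually_within
    · exact (Complex.continuous_ofReal.tendsto' 1 1 (by simp)).mono_left nhdsWithin_le_nhds
    · filter_upwards [self_mem_nhdsWithin] with r hr
      simpa using hr
  apply ht.frequently
  apply Eventually.frequently
  have : ∀ᶠ r : ℝ in 𝓝[≠] 1, 0 < r := nhdsWithin_le_nhds (lt_mem_nhds one_pos)
  filter_upwards [this] with r hr
  rw [hmgf]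
  have h := Real.integral_rpow_mul_exp_neg_mul_Ioi ha hr
  have h2 : (r:ℂ) ^ (-(a:ℂ)) = (((1/r) ^ a : ℝ) : ℂ) := by
    rw [← Complex.ofReal_neg, ← Complex.ofReal_cpow hr.le, Real.rpow_neg hr.le, one_div, Real.inv_rpow hr.le]
  rw [h2, ← Complex.ofReal_mul, ← h, ← integral_complex_ofReal]
  congr 1; ext t
  push_cast; ring

lemma exp_contour {Φ : ℂ → ℂ} (hΦ : DifferentiableOn ℂ Φ {z : ℂ | 0 < z.re}) {C : ℝ}
    (hC : ∀ z : ℂ, 1/2 ≤ z.re → z.re ≤ 2 → ‖Φ z‖ ≤ C * (1 + z.im ^ 2)⁻¹) {x : ℝ} (hx : 0 ≤ x) :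
    ‖∫ t : ℝ, Complex.exp ((2 + t * Complex.I) * x) * Φ (2 + t * Complex.I)‖
      ≤ C * Real.pi * Real.exp (x / 2) := by
  have hopen : IsOpen {z : ℂ | 0 < z.re} := isOpen_lt continuous_const Complex.continuous_re
  set g : ℂ → ℂ := fun z => Complex.exp (z * x) * Φ z with hg
  have hgd : DifferentiableOn ℂ g {z : ℂ | 0 < z.re} := by
    apply DifferentiableOn.mul _ hΦ
    exact (Differentiable.cexp (by fun_prop)).differentiableOn
  have hgb : ∀ z : ℂ, 1/2 ≤ z.re → z.re ≤ 2 → ‖g z‖ ≤ Real.exp (z.re * x) * (C * (1 + z.im ^ 2)⁻¹) := by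
    intro z h1 h2
    simp only [hg, norm_mul, Complex.norm_exp]
    have : (z * x).re = z.re * x := by simp
    rw [this]
    gcongr
    exact hC z h1 h2
  have hC0 : 0 ≤ C := by
    have := (norm_nonneg _).trans (hC 1 (by norm_num) (by norm_num))
    simpa using this
  have hline : ∀ c : ℝ, 1/2 ≤ c → c ≤ 2 → Integrable (fun t : ℝ => g (c + t * Complex.I)) := by
    intro c h1 h2
    have hcont : Continuous (fun t : ℝ => g (c + t * Complex.I)) := by
      have := hgd.continuousOn
      refine this.comp_continuous (by fun_prop) ?_
      intro t
      simp; linarith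
    refine Integrable.mono' ((integrable_inv_one_add_sq.const_mul C).const_mul (Real.exp (c * x))) hcont.aestronglyMeasurable ?_
    filter_upwards with t
    have := hgb (c + t * Complex.I) (by simpa using h1) (by simpa using h2)
    simpa using this
  have hlim : ∀ c : ℝ, 1/2 ≤ c → c ≤ 2 → Tendsto (fun T : ℝ => ∫ t in (-T)..T, g (c + t * Complex.I)) atTop
      (𝓝 (∫ t : ℝ, g (c + t * Complex.I))) := fun c h1 h2 =>
    intervalIntegral_tendsto_integral (hline c h1 h2) tendsto_neg_atTop_atBot tendsto_id
  have hhor : ∀ T : ℝ, ‖∫ y in (1/2:ℝ)..2, g (y + T * Complex.I)‖ ≤ Real.exp (2 * x) * C * (1 + T^2)⁻¹ * (3/2) := by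
    intro T
    have := intervalIntegral.norm_integral_le_of_norm_le_const (a := (1/2:ℝ)) (b := 2)
      (f := fun y : ℝ => g (y + T * Complex.I)) (C := Real.exp (2 * x) * C * (1 + T^2)⁻¹) ?_
    · refine this.trans (le_of_eq ?_)
      norm_num
    · intro y hy
      rw [uIoc_of_le (by norm_num)] at hy
      have := hgb (y + T * Complex.I) (by simpa using hy.1.le) (by simpa using hy.2)
      refine this.trans ?_
      simp only [Complex.add_re, Complex.ofReal_re, Complex.mul_re, Complex.I_re, mul_zero, Complex.ofReal_im, Complex.I_im,
        mul_one, sub_self, add_zero, Complex.add_im, Complex.mul_im, zero_add]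
      rw [mul_assoc]
      have := hy.2
      gcongr
  have hdecay : Tendsto (fun T : ℝ => Real.exp (2 * x) * C * (1 + T^2)⁻¹ * (3/2)) atTop (𝓝 0) := by
    have : Tendsto (fun T : ℝ => (1 + T^2)⁻¹) atTop (𝓝 0) := by
      apply Tendsto.inv_tendsto_atTop
      exact tendsto_atTop_add_const_left _ _ (tendsto_pow_atTop two_ne_zero)
    simpa using (this.const_mul (Real.exp (2 * x) * C)).mul_const (3/2)
  have h1 : Tendsto (fun T : ℝ => ∫ y in (1/2:ℝ)..2, g (y + T * Complex.I)) atTop (𝓝 0) :=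
    squeeze_zero_norm (fun T => hhor T) hdecay
  have h2 : Tendsto (fun T : ℝ => ∫ y in (1/2:ℝ)..2, g (y + (-T : ℝ) * Complex.I)) atTop (𝓝 0) :=
    squeeze_zero_norm (fun T => (hhor (-T)).trans (by simp)) hdecay
  have hrect : ∀ T : ℝ, (∫ y in (1/2:ℝ)..2, g (y + (-T : ℝ) * Complex.I)) - (∫ y in (1/2:ℝ)..2, g (y + T * Complex.I))
      + Complex.I * (∫ t in (-T)..T, g ((2:ℝ) + t * Complex.I)) - Complex.I * (∫ t in (-T)..T, g ((1/2:ℝ) + t * Complex.I)) = 0 := by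
    intro T
    have := Complex.integral_boundary_rect_eq_zero_of_differentiableOn g ⟨1/2, -T⟩ ⟨2, T⟩ ?_
    · simpa using this
    · apply hgd.mono
      intro z hz
      have := hz.1
      simp only [mem_preimage] at this
      rw [uIcc_of_le (by norm_num)] at this
      have := this.1
      simp only [mem_ofPred_eq]
      norm_num at this
      linarith
  have hl := ((h2.sub h1).add ((hlim 2 (by norm_num) le_rfl).const_mul Complex.I)).sub
    ((hlim (1/2) le_rfl (by norm_num)).const_mul Complex.I)
  have h0 := tendsto_nhds_unique hl ((tendsto_const_nhds (x := (0:ℂ))).congr (fun T => (hrect T).symm))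
  have heq : ∫ t : ℝ, g ((2:ℝ) + t * Complex.I) = ∫ t : ℝ, g ((1/2:ℝ) + t * Complex.I) := by
    have : Complex.I * ((∫ t : ℝ, g ((2:ℝ) + t * Complex.I)) - ∫ t : ℝ, g ((1/2:ℝ) + t * Complex.I)) = 0 := by
      rw [← h0]; ring
    have := (mul_eq_zero.mp this).resolve_left Complex.I_ne_zero
    exact sub_eq_zero.mp this
  have : ∫ t : ℝ, Complex.exp ((2 + t * Complex.I) * x) * Φ (2 + t * Complex.I) = ∫ t : ℝ, g ((2:ℝ) + t * Complex.I) := by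
    simp [hg]
  rw [this, heq]
  calc _ ≤ ∫ t : ℝ, Real.exp (x/2) * (C * (1 + t^2)⁻¹) := by
        apply norm_integral_le_of_norm_le ((integrable_inv_one_add_sq.const_mul C).const_mul _)
        filter_upwards with t
        have := hgb ((1/2:ℝ) + t * Complex.I) (by simp) (by simp; norm_num)
        refine this.trans (le_of_eq ?_)
        simp
        left; ring
    _ = _ := by
        rw [integral_const_mul, integral_const_mul, integral_univ_inv_one_add_sq]; ring

/-- The Laplace transform of the difference, extended over the removable point `1`. -/
lemma exists_Phi {α b : ℝ} (hα : 0 < α) (hα1 : α ≤ 1) (hb : 2 ≤ b) :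
    ∃ Φ : ℂ → ℂ, DifferentiableOn ℂ Φ {z : ℂ | 0 < z.re} ∧
      (∃ C : ℝ, ∀ z : ℂ, 1/2 ≤ z.re → z.re ≤ 2 → ‖Φ z‖ ≤ C * (1 + z.im ^ 2)⁻¹) ∧
      (∀ z : ℂ, 1 < z.re → Φ z = z ^ (-(b:ℂ)) / (1 - z ^ (-(α:ℂ))) - (α:ℂ)⁻¹ * (1 / (z ^ 2 * (z - 1)))) := by
  have hopen : IsOpen {z : ℂ | 0 < z.re} := isOpen_lt continuous_const Complex.continuous_re
  have h1mem : {z : ℂ | 0 < z.re} ∈ 𝓝 (1:ℂ) := hopen.mem_nhds (by simp)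
  have hne : ∀ z : ℂ, 0 < z.re → z ≠ 0 := by rintro z hz rfl; simp at hz
  have hsl : ∀ z : ℂ, 0 < z.re → z ∈ Complex.slitPlane := fun z hz => Or.inl hz
  have hpow : ∀ w : ℂ, DifferentiableOn ℂ (fun z : ℂ => z ^ w) {z : ℂ | 0 < z.re} := fun w z hz =>
    (differentiableAt_id.cpow_const (hsl z hz)).differentiableWithinAt
  set q : ℂ → ℂ := dslope (fun z : ℂ => z ^ (α:ℂ)) 1 with hq
  have hqd : DifferentiableOn ℂ q {z : ℂ | 0 < z.re} := (Complex.differentiableOn_dslope h1mem).2 (hpow _)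
  have hq1 : q 1 = α := by
    rw [hq, dslope_same]
    have := (hasDerivAt_id (1:ℂ)).cpow_const (c := (α:ℂ)) (by simp)
    simpa using this.deriv
  have hqz : ∀ z : ℂ, z ≠ 1 → q z = (z ^ (α:ℂ) - 1) / (z - 1) := by
    intro z hz
    rw [hq, dslope_of_ne _ hz, slope_def_field]; simp
  have hroot : ∀ z : ℂ, 0 < z.re → z ^ (α:ℂ) = 1 → z = 1 := by
    intro z hz h
    rw [Complex.cpow_def_of_ne_zero (hne z hz), Complex.exp_eq_one_iff] at h
    obtain ⟨n, hn⟩ := h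
    have him := congrArg Complex.im hn
    have hre := congrArg Complex.re hn
    simp [Complex.log_re, Complex.log_im] at him hre
    have harg := Complex.abs_arg_lt_pi_div_two_iff.2 (Or.inl hz)
    have hn0 : n = 0 := by
      by_contra hn0
      have h1 : (1:ℝ) ≤ |(n:ℝ)| := by exact_mod_cast Int.one_le_abs hn0
      have h2 : |z.arg * α| = |(n:ℝ)| * (2 * Real.pi) := by
        rw [him, abs_mul, abs_of_pos (by positivity : (0:ℝ) < 2 * Real.pi)]
      rw [abs_mul, abs_of_pos hα] at h2
      have hp := Real.pi_pos
      nlinarith [abs_nonneg z.arg]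
    subst hn0
    simp [hα.ne'] at him
    rw [← Complex.norm_mul_exp_arg_mul_I z, him]
    rcases hre with (h | h) | h
    · exact absurd h (hne z hz)
    · rcases h with h | h
      · simp [h]
      · linarith [norm_nonneg z]
    · exact absurd h hα.ne'
  have hq0 : ∀ z : ℂ, 0 < z.re → q z ≠ 0 := by
    intro z hz
    by_cases h : z = 1
    · rw [h, hq1]; exact_mod_cast hα.ne'
    · rw [hqz z h]
      refine div_ne_zero (fun h' => h (hroot z hz (sub_eq_zero.mp h'))) (sub_ne_zero.2 h)
  set ψ : ℂ → ℂ := fun z => z ^ ((α:ℂ) - b) / q z - (α:ℂ)⁻¹ * (z^2)⁻¹ with hψ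
  have hψd : DifferentiableOn ℂ ψ {z : ℂ | 0 < z.re} := by
    apply DifferentiableOn.sub
    · exact (hpow _).div hqd (fun z hz => hq0 z hz)
    · apply DifferentiableOn.const_mul
      exact DifferentiableOn.inv (by fun_prop) (fun z hz => pow_ne_zero _ (hne z hz))
  have hψ1 : ψ 1 = 0 := by simp [hψ, hq1]
  have hform : ∀ z : ℂ, 0 < z.re → z ≠ 1 → dslope ψ 1 z =
      z ^ (-(b:ℂ)) / (1 - z ^ (-(α:ℂ))) - (α:ℂ)⁻¹ * (1 / (z ^ 2 * (z - 1))) := by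
    intro z hz h1
    rw [dslope_of_ne _ h1, slope_def_field, hψ1]
    simp only [hψ]
    rw [hqz z h1]
    have hz0 := hne z hz
    have e1 : z ^ ((α:ℂ) - b) = z ^ (α:ℂ) * z ^ (-(b:ℂ)) := by
      rw [← Complex.cpow_add _ _ hz0]; ring_nf
    have e2 : z ^ (-(α:ℂ)) = (z ^ (α:ℂ))⁻¹ := Complex.cpow_neg _ _
    rw [e1, e2]
    have hA : z ^ (α:ℂ) ≠ 0 := by simp [Complex.cpow_eq_zero_iff, hz0]
    have hA1 : z ^ (α:ℂ) - 1 ≠ 0 := fun h' => h1 (hroot z hz (sub_eq_zero.mp h'))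
    have hz1 : z - 1 ≠ 0 := sub_ne_zero.2 h1
    have hαc : (α:ℂ) ≠ 0 := by exact_mod_cast hα.ne'
    have hA2 : 1 - (z ^ (α:ℂ))⁻¹ = (z ^ (α:ℂ) - 1) / z ^ (α:ℂ) := by field_simp
    rw [hA2]
    field_simp
    simp
  have hΦd : DifferentiableOn ℂ (dslope ψ 1) {z : ℂ | 0 < z.re} := (Complex.differentiableOn_dslope h1mem).2 hψd
  refine ⟨dslope ψ 1, hΦd, ?_, ?_⟩
  · -- bound
    obtain ⟨T, hT1, hT⟩ : ∃ T : ℝ, 1 ≤ T ∧ 2 ≤ T ^ α := by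
      refine ⟨2 ^ (1/α), Real.one_le_rpow (by norm_num) (by positivity), ?_⟩
      rw [← Real.rpow_mul (by norm_num)]
      simp [hα.ne']
    have hcomp : IsCompact (Icc (1/2:ℝ) 2 ×ℂ Icc (-T) T) := isCompact_Icc.reProdIm isCompact_Icc
    obtain ⟨M, hM⟩ := hcomp.exists_bound_of_continuousOn (f := dslope ψ 1) (hΦd.continuousOn.mono (by
      intro z hz
      have := hz.1.1
      simp only [mem_ofPred_eq]
      linarith))
    have hM0 : 0 ≤ M := (norm_nonneg _).trans (hM 1 ⟨⟨by norm_num, by norm_num⟩, ⟨by simp; linarith, by simp; linarith⟩⟩)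
    refine ⟨M * (1 + T^2) + (2 + α⁻¹) * 2, fun z h1 h2 => ?_⟩
    have hz : 0 < z.re := by linarith
    have hsq : 0 < 1 + z.im ^ 2 := by positivity
    rw [← div_eq_mul_inv, le_div_iff₀ hsq]
    by_cases him : |z.im| ≤ T
    · have hb1 := hM z ⟨⟨h1, h2⟩, abs_le.mp him⟩
      have : z.im ^ 2 ≤ T ^ 2 := by
        rw [← sq_abs]; gcongr
      calc _ ≤ M * (1 + T^2) := by gcongr
        _ ≤ _ := by
          have : 0 < α⁻¹ := by positivity
          linarith
    · push Not at him
      have hi1 : 1 ≤ |z.im| := by linarith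
      have hz1 : z ≠ 1 := by rintro rfl; simp at hi1; linarith
      rw [hform z hz hz1]
      have hnz : |z.im| ≤ ‖z‖ := Complex.abs_im_le_norm z
      have hnz1 : 1 ≤ ‖z - 1‖ := by
        have := Complex.abs_im_le_norm (z - 1)
        simp at this
        linarith
      have hA : ‖z ^ (-(b:ℂ))‖ ≤ (z.im^2)⁻¹ := by
        rw [← Complex.ofReal_neg, Complex.norm_cpow_real]
        calc ‖z‖ ^ (-b) ≤ ‖z‖ ^ (-2:ℝ) := Real.rpow_le_rpow_of_exponent_le (by linarith) (by linarith)
          _ = (‖z‖^2)⁻¹ := by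
            rw [Real.rpow_neg (norm_nonneg _)]; norm_cast
          _ ≤ (z.im^2)⁻¹ := by
            have : z.im^2 ≤ ‖z‖^2 := by rw [← sq_abs]; gcongr
            have : 0 < z.im^2 := by rw [← sq_abs]; positivity
            gcongr
      have hB : 1/2 ≤ ‖1 - z ^ (-(α:ℂ))‖ := by
        have : ‖z ^ (-(α:ℂ))‖ ≤ 1/2 := by
          rw [← Complex.ofReal_neg, Complex.norm_cpow_real, Real.rpow_neg (norm_nonneg _), one_div]
          apply inv_anti₀ (by norm_num)
          refine hT.trans (Real.rpow_le_rpow (by linarith) (by linarith) hα.le)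
        have h3 := norm_sub_norm_le (1:ℂ) (z ^ (-(α:ℂ)))
        rw [norm_one] at h3
        linarith
      have hC : ‖(α:ℂ)⁻¹ * (1 / (z ^ 2 * (z - 1)))‖ ≤ α⁻¹ * (z.im^2)⁻¹ := by
        rw [norm_mul, norm_inv, Complex.norm_real, Real.norm_of_nonneg hα.le, norm_div, norm_one, norm_mul, norm_pow, one_div]
        have : z.im^2 ≤ ‖z‖^2 * ‖z-1‖ := by
          rw [← sq_abs]
          calc |z.im|^2 = |z.im|^2 * 1 := by ring
            _ ≤ _ := by gcongr
        have : 0 < z.im^2 := by rw [← sq_abs]; positivity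
        gcongr
      have hD : ‖z ^ (-(b:ℂ)) / (1 - z ^ (-(α:ℂ)))‖ ≤ 2 * (z.im^2)⁻¹ := by
        rw [norm_div, div_le_iff₀ (by linarith)]
        have : 0 ≤ (z.im^2)⁻¹ := by positivity
        nlinarith
      have hE := (norm_sub_le _ _).trans (add_le_add hD hC)
      have hpos : 1 ≤ z.im^2 := by rw [← sq_abs]; nlinarith
      have hF : (z.im^2)⁻¹ * (1 + z.im^2) ≤ 2 := by
        rw [inv_mul_le_iff₀ (by linarith)]; linarith
      calc _ ≤ (2 * (z.im^2)⁻¹ + α⁻¹ * (z.im^2)⁻¹) * (1 + z.im^2) := by gcongr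
        _ = (2 + α⁻¹) * ((z.im^2)⁻¹ * (1 + z.im^2)) := by ring
        _ ≤ (2 + α⁻¹) * 2 := by
          have : 0 < α⁻¹ := by positivity
          gcongr
        _ ≤ _ := by
          have : 0 ≤ M * (1 + T^2) := by positivity
          linarith
  · intro z hz
    exact hform z (by linarith) (by rintro rfl; simp at hz)

lemma gamma_laplace_integrable {a : ℝ} (ha : 0 < a) {s : ℂ} (hs : 0 < s.re) :
    IntegrableOn (fun t : ℝ => Complex.exp (-(s * t)) * ((t ^ (a - 1) : ℝ) : ℂ)) (Ioi 0) := by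
  by_contra h
  have h1 := gamma_laplace ha hs
  rw [integral_undef h] at h1
  have h2 : (Real.Gamma a : ℂ) ≠ 0 := by exact_mod_cast (Real.Gamma_pos_of_pos ha).ne'
  have hs0 : s ≠ 0 := by rintro rfl; simp at hs
  have h3 : s ^ (-(a:ℂ)) ≠ 0 := by simp [Complex.cpow_eq_zero_iff, hs0]
  exact mul_ne_zero h3 h2 h1.symm

lemma comparison_laplace {s : ℂ} (hs : 1 < s.re) :
    IntegrableOn (fun t : ℝ => Complex.exp (-(s * t)) * ((Real.exp t - 1 - t : ℝ) : ℂ)) (Ioi 0) ∧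
    ∫ t in Ioi (0:ℝ), Complex.exp (-(s * t)) * ((Real.exp t - 1 - t : ℝ) : ℂ) = 1 / (s ^ 2 * (s - 1)) := by
  have hs' : 0 < (s - 1).re := by simpa using hs
  have hs0 : 0 < s.re := by linarith
  have i1 := gamma_laplace_integrable one_pos hs'
  have i2 := gamma_laplace_integrable one_pos hs0
  have i3 := gamma_laplace_integrable two_pos hs0
  have e1 := gamma_laplace one_pos hs'
  have e2 := gamma_laplace one_pos hs0
  have e3 := gamma_laplace two_pos hs0
  have hfun : (fun t : ℝ => Complex.exp (-(s * t)) * ((Real.exp t - 1 - t : ℝ) : ℂ)) = fun t : ℝ =>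
      Complex.exp (-((s - 1) * t)) * ((t ^ ((1:ℝ) - 1) : ℝ) : ℂ) - Complex.exp (-(s * t)) * ((t ^ ((1:ℝ) - 1) : ℝ) : ℂ)
        - Complex.exp (-(s * t)) * ((t ^ ((2:ℝ) - 1) : ℝ) : ℂ) := by
    ext t
    have : (2:ℝ) - 1 = 1 := by norm_num
    rw [this]
    have h : -((s - 1) * t) = -(s * t) + t := by ring
    rw [h, Complex.exp_add]
    simp only [sub_self, Real.rpow_zero, Real.rpow_one]
    push_cast; ring
  rw [hfun]
  refine ⟨(i1.sub i2).sub i3, ?_⟩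
  have e12 := integral_sub i1 i2
  have e123 := integral_sub (i1.sub i2) i3
  simp only [Pi.sub_apply] at e123
  rw [e123, e12, e1, e2, e3]
  have hsn : s ≠ 0 := by rintro rfl; simp at hs0
  have hsn1 : s - 1 ≠ 0 := by intro h; rw [h] at hs'; simp at hs'
  have h2 : s ^ (-((2:ℝ):ℂ)) = (s^2)⁻¹ := by
    rw [Complex.cpow_neg]; norm_num
  have hG2 : Real.Gamma 2 = 1 := by simp
  rw [h2, hG2]
  simp only [Complex.ofReal_one, Complex.cpow_neg_one, Real.Gamma_one, mul_one]
  field_simp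
  ring

lemma base_estimate {α b : ℝ} (hα : 0 < α) (hα1 : α ≤ 1) (hb : 2 ≤ b) :
    ∃ C : ℝ, ∀ x : ℝ, 0 < x →
      Summable (fun k : ℕ => x ^ (α * k + b - 1) / Real.Gamma (α * k + b)) ∧
      |(∑' k : ℕ, x ^ (α * k + b - 1) / Real.Gamma (α * k + b)) - α⁻¹ * (Real.exp x - 1 - x)|
        ≤ C * Real.exp (x / 2) := by
  obtain ⟨Φ, hΦd, ⟨C, hC⟩, hΦ⟩ := exists_Phi hα hα1 hb
  have hak : ∀ k : ℕ, 2 ≤ α * k + b := fun k => by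
    have : 0 ≤ α * k := by positivity
    linarith
  have hGpos : ∀ k : ℕ, 0 < Real.Gamma (α * k + b) := fun k => Real.Gamma_pos_of_pos (by linarith [hak k])
  set F : ℝ → ℝ := fun x => ∑' k : ℕ, x ^ (α * k + b - 1) / Real.Gamma (α * k + b) with hF
  set bd : ℕ → ℝ := fun k => (2/3 : ℝ) ^ (α * k + b - 1) with hbd
  have hbdpos : ∀ k, 0 < bd k := fun k => by simp only [hbd]; positivity
  have hbds : Summable bd := by
    have : bd = fun k : ℕ => (2/3 : ℝ) ^ (b - 1) * ((2/3 : ℝ) ^ α) ^ k := by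
      ext k
      simp only [hbd]
      rw [← Real.rpow_natCast, ← Real.rpow_mul (by norm_num), ← Real.rpow_add (by norm_num)]
      ring_nf
    rw [this]
    exact (summable_geometric_of_lt_one (by positivity)
      (Real.rpow_lt_one (by norm_num) (by norm_num) hα)).mul_left _
  have hterm : ∀ (k : ℕ) (x : ℝ), 0 ≤ x → x ^ (α * k + b - 1) / Real.Gamma (α * k + b) ≤ bd k * Real.exp (3/2 * x) :=
    fun k x hx => term_bound (by linarith [hak k]) hx
  have htpos : ∀ (k : ℕ) (x : ℝ), 0 ≤ x → 0 ≤ x ^ (α * k + b - 1) / Real.Gamma (α * k + b) := fun k x hx =>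
    div_nonneg (Real.rpow_nonneg hx _) (hGpos k).le
  have hsum : ∀ x : ℝ, 0 ≤ x → Summable (fun k : ℕ => x ^ (α * k + b - 1) / Real.Gamma (α * k + b)) := fun x hx =>
    Summable.of_nonneg_of_le (fun k => htpos k x hx) (fun k => hterm k x hx) (hbds.mul_right _)
  have hF0 : ∀ x, 0 ≤ x → 0 ≤ F x := fun x hx => tsum_nonneg (fun k => htpos k x hx)
  have hFle : ∀ x, 0 ≤ x → F x ≤ (∑' k, bd k) * Real.exp (3/2 * x) := by
    intro x hx
    rw [← tsum_mul_right]
    exact (hsum x hx).tsum_le_tsum (fun k => hterm k x hx) (hbds.mul_right _)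
  have hFc : ContinuousOn F (Ioi 0) := by
    intro x hx
    have hx : 0 < x := hx
    apply ContinuousAt.continuousWithinAt
    have : ContinuousOn F (Ioo 0 (x+1)) := by
      apply continuousOn_tsum (u := fun k => bd k * Real.exp (3/2 * (x+1)))
      · intro k y hy
        apply ContinuousAt.continuousWithinAt
        apply ContinuousAt.div_const
        exact Real.continuousAt_rpow_const _ _ (Or.inl hy.1.ne')
      · exact hbds.mul_right _
      · intro k y hy
        rw [Real.norm_of_nonneg (htpos k y hy.1.le)]
        refine (hterm k y hy.1.le).trans ?_
        have := hy.2.le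
        have := (hbdpos k).le
        gcongr
    exact this.continuousAt (Ioo_mem_nhds hx (by linarith))
  -- Laplace transform of F
  have hlap : ∀ s : ℂ, s.re = 2 →
      IntegrableOn (fun t : ℝ => Complex.exp (-(s * t)) * (F t : ℂ)) (Ioi 0) ∧
      ∫ t in Ioi (0:ℝ), Complex.exp (-(s * t)) * (F t : ℂ) = s ^ (-(b:ℂ)) / (1 - s ^ (-(α:ℂ))) := by
    intro s hs
    have hs0 : s ≠ 0 := by rintro rfl; simp at hs
    have hnexp : ∀ t : ℝ, ‖Complex.exp (-(s * t))‖ = Real.exp (-2 * t) := by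
      intro t
      rw [Complex.norm_exp]; simp [hs]
    have hei : IntegrableOn (fun t : ℝ => Real.exp (-(1/2) * t)) (Ioi 0) :=
      integrableOn_exp_mul_Ioi (by norm_num) 0
    have hexp2 : ∀ t : ℝ, Real.exp (-2 * t) * Real.exp (3/2 * t) = Real.exp (-(1/2) * t) := by
      intro t; rw [← Real.exp_add]; ring_nf
    constructor
    · refine Integrable.mono' (hei.const_mul (∑' k, bd k)) ?_ ?_
      · apply ContinuousOn.aestronglyMeasurable _ measurableSet_Ioi
        apply ContinuousOn.mul (by fun_prop)
        exact Complex.continuous_ofReal.comp_continuousOn hFc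
      · filter_upwards [ae_restrict_mem measurableSet_Ioi] with t ht
        have ht : 0 < t := ht
        rw [norm_mul, hnexp, Complex.norm_real, Real.norm_of_nonneg (hF0 t ht.le), ← hexp2]
        have := hFle t ht.le
        calc _ ≤ Real.exp (-2 * t) * ((∑' k, bd k) * Real.exp (3/2 * t)) := by gcongr
          _ = _ := by ring
    · have h := hasSum_integral_of_dominated_convergence (μ := volume.restrict (Ioi (0:ℝ)))
        (F := fun (k:ℕ) (t:ℝ) => Complex.exp (-(s * t)) * ((t ^ (α * k + b - 1) / Real.Gamma (α * k + b) : ℝ) : ℂ))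
        (f := fun t : ℝ => Complex.exp (-(s * t)) * (F t : ℂ))
        (fun k t => bd k * Real.exp (-(1/2) * t)) ?_ ?_ ?_ ?_ ?_
      · have hk : ∀ k : ℕ, ∫ t in Ioi (0:ℝ), Complex.exp (-(s * t)) * ((t ^ (α * k + b - 1) / Real.Gamma (α * k + b) : ℝ) : ℂ)
            = s ^ (-(b:ℂ)) * (s ^ (-(α:ℂ))) ^ k := by
          intro k
          have h1 := gamma_laplace (a := α * k + b) (by linarith [hak k]) (s := s) (by linarith)
          have hG : (Real.Gamma (α * k + b) : ℂ) ≠ 0 := by exact_mod_cast (hGpos k).ne'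
          calc _ = ∫ t in Ioi (0:ℝ), (Complex.exp (-(s * t)) * ((t ^ (α * k + b - 1) : ℝ) : ℂ)) * (Real.Gamma (α * k + b) : ℂ)⁻¹ := by
                congr 1; ext t; push_cast; ring
            _ = s ^ (-((α * k + b : ℝ) : ℂ)) := by
                rw [integral_mul_const, h1]; field_simp
            _ = _ := by
                rw [← Complex.cpow_nat_mul, ← Complex.cpow_add _ _ hs0]
                congr 1; push_cast; ring
        simp only [hk] at h
        refine h.unique ?_
        rw [div_eq_mul_inv]
        apply HasSum.mul_left
        apply hasSum_geometric_of_norm_lt_one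
        rw [← Complex.ofReal_neg, Complex.norm_cpow_real]
        apply Real.rpow_lt_one_of_one_lt_of_neg _ (by linarith)
        have := Complex.re_le_norm s
        linarith
      · intro k
        apply ContinuousOn.aestronglyMeasurable _ measurableSet_Ioi
        apply ContinuousOn.mul (by fun_prop)
        apply Complex.continuous_ofReal.comp_continuousOn
        apply ContinuousOn.div_const
        intro y hy
        exact (Real.continuousAt_rpow_const _ _ (Or.inl (ne_of_gt hy))).continuousWithinAt
      · intro k
        filter_upwards [ae_restrict_mem measurableSet_Ioi] with t ht
        have ht : 0 < t := ht
        rw [norm_mul, hnexp, Complex.norm_real, Real.norm_of_nonneg (htpos k t ht.le), ← hexp2]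
        have := hterm k t ht.le
        calc _ ≤ Real.exp (-2 * t) * (bd k * Real.exp (3/2 * t)) := by gcongr
          _ = _ := by ring
      · filter_upwards with t
        exact hbds.mul_right _
      · simp_rw [tsum_mul_right]
        exact hei.const_mul _
      · filter_upwards [ae_restrict_mem measurableSet_Ioi] with t ht
        have ht : (0:ℝ) < t := ht
        apply HasSum.mul_left
        exact Complex.hasSum_ofReal.2 (hsum t ht.le).hasSum
  set D : ℝ → ℝ := fun x => F x - α⁻¹ * (Real.exp x - 1 - x) with hD
  have hDlap : ∀ s : ℂ, s.re = 2 →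
      IntegrableOn (fun t : ℝ => Complex.exp (-(s * t)) * (D t : ℂ)) (Ioi 0) ∧
      ∫ t in Ioi (0:ℝ), Complex.exp (-(s * t)) * (D t : ℂ) = Φ s := by
    intro s hs
    obtain ⟨i1, e1⟩ := hlap s hs
    obtain ⟨i2, e2⟩ := comparison_laplace (s := s) (by linarith)
    have hfun : (fun t : ℝ => Complex.exp (-(s * t)) * (D t : ℂ)) = fun t : ℝ =>
        Complex.exp (-(s * t)) * (F t : ℂ) - (α:ℂ)⁻¹ * (Complex.exp (-(s * t)) * ((Real.exp t - 1 - t : ℝ) : ℂ)) := by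
      ext t; simp only [hD]; push_cast; ring
    rw [hfun]
    refine ⟨i1.sub (i2.const_mul _), ?_⟩
    rw [integral_sub i1 (i2.const_mul _), integral_const_mul, e1, e2, hΦ s (by linarith)]
  set f : ℝ → ℂ := indicator (Ioi 0) (fun t : ℝ => Complex.exp (-((2:ℂ) * t)) * (D t : ℂ)) with hf
  have hfi : Integrable f := (integrable_indicator_iff measurableSet_Ioi).2 (hDlap 2 (by simp)).1
  have hFour : ∀ w : ℝ, FourierTransform.fourier f w = Φ (2 + (2 * Real.pi * w : ℝ) * Complex.I) := by
    intro w
    rw [← (hDlap (2 + (2 * Real.pi * w : ℝ) * Complex.I) (by simp)).2, Real.fourier_real_eq_integral_exp_smul,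
      ← integral_indicator measurableSet_Ioi]
    congr 1; ext t
    by_cases ht : t ∈ Ioi (0:ℝ)
    · simp only [hf, indicator_of_mem ht, smul_eq_mul]
      rw [← mul_assoc, ← Complex.exp_add]
      congr 2
      push_cast; ring
    · simp [hf, indicator_of_notMem ht]
  have hΦc : Continuous (fun t : ℝ => Φ (2 + t * Complex.I)) := by
    refine hΦd.continuousOn.comp_continuous (by fun_prop) ?_
    intro t
    simp
  have hΦi : Integrable (fun t : ℝ => Φ (2 + t * Complex.I)) := by
    refine Integrable.mono' (integrable_inv_one_add_sq.const_mul C) hΦc.aestronglyMeasurable ?_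
    filter_upwards with t
    have := hC (2 + t * Complex.I) (by simp; norm_num) (by simp)
    simpa using this
  have hFi : Integrable (FourierTransform.fourier f) := by
    have : FourierTransform.fourier f = fun w : ℝ => Φ (2 + ((2 * Real.pi) * w : ℝ) * Complex.I) := by
      ext w; rw [hFour]
    rw [this]
    exact hΦi.comp_mul_left' (R := 2 * Real.pi) (by positivity)
  refine ⟨(2 * Real.pi)⁻¹ * (C * Real.pi), fun x hx => ⟨hsum x hx.le, ?_⟩⟩
  have hfc : ContinuousAt f x := by
    have h1 : ContinuousAt (fun t : ℝ => Complex.exp (-((2:ℂ) * t)) * (D t : ℂ)) x := by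
      apply ContinuousAt.mul (by fun_prop)
      apply Complex.continuous_ofReal.continuousAt.comp
      apply ContinuousAt.sub (hFc.continuousAt (Ioi_mem_nhds hx)) (by fun_prop)
    refine h1.congr ?_
    filter_upwards [Ioi_mem_nhds hx] with t ht
    rw [hf, indicator_of_mem ht]
  have hinv := hfi.fourierInv_fourier_eq hFi hfc
  rw [Real.fourierInv_eq'] at hinv
  have hDx : (D x : ℂ) = (2 * Real.pi : ℝ)⁻¹ • ∫ t : ℝ, Complex.exp ((2 + t * Complex.I) * x) * Φ (2 + t * Complex.I) := by
    have h1 := Measure.integral_comp_mul_left (fun t : ℝ => Complex.exp ((2 + t * Complex.I) * x) * Φ (2 + t * Complex.I)) (2 * Real.pi)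
    rw [abs_of_pos (by positivity)] at h1
    rw [← h1]
    have h2 : (D x : ℂ) = Complex.exp (2 * x) * f x := by
      rw [hf, indicator_of_mem (show x ∈ Ioi (0:ℝ) from hx), ← mul_assoc, ← Complex.exp_add]; simp
    rw [h2, ← hinv, ← integral_const_mul]
    congr 1; ext w
    rw [hFour, smul_eq_mul, ← mul_assoc, ← Complex.exp_add]
    congr 2
    simp
    ring
  have hnorm : |D x| = ‖(D x : ℂ)‖ := by simp
  change |D x| ≤ _
  rw [hnorm, hDx, norm_smul, norm_inv, Real.norm_of_nonneg (by positivity), mul_assoc]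
  have := exp_contour hΦd hC hx.le
  gcongr

lemma poly_estimate {α : ℝ} (hα : 0 < α) (hα1 : α ≤ 1) (r : ℕ → ℝ) (n : ℕ) :
    ∀ b : ℝ, (n:ℝ) + 2 ≤ b → ∃ C : ℝ, ∀ x : ℝ, 1 ≤ x →
      Summable (fun k : ℕ => (∏ i ∈ Finset.range n, ((k:ℝ) + r i)) * (x ^ (α * k + b - 1) / Real.Gamma (α * k + b))) ∧
      |(∑' k : ℕ, (∏ i ∈ Finset.range n, ((k:ℝ) + r i)) * (x ^ (α * k + b - 1) / Real.Gamma (α * k + b)))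
        - α⁻¹ ^ (n + 1) * x ^ n * Real.exp x| ≤ C * (x ^ n / x * Real.exp x) := by
  induction n with
  | zero =>
    intro b hb
    obtain ⟨C, hC⟩ := base_estimate hα hα1 (b := b) (by simpa using hb)
    refine ⟨2 * |C| + 4 * α⁻¹, fun x hx => ?_⟩
    have hx0 : 0 < x := by linarith
    obtain ⟨h1, h2⟩ := hC x hx0
    simp only [Finset.range_zero, Finset.prod_empty, one_mul, zero_add, pow_one, pow_zero, mul_one]
    refine ⟨h1, ?_⟩
    have hα' : 0 < α⁻¹ := by positivity
    set F := ∑' k : ℕ, x ^ (α * k + b - 1) / Real.Gamma (α * k + b)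
    have e1 : x / 2 ≤ Real.exp (x/2) := by linarith [Real.add_one_le_exp (x/2)]
    have e2 : Real.exp (x/2) * Real.exp (x/2) = Real.exp x := by rw [← Real.exp_add]; ring_nf
    have e3 : Real.exp (x/2) ≤ 2 * (1 / x * Real.exp x) := by
      rw [← e2]
      have : 0 < Real.exp (x/2) := Real.exp_pos _
      have h : 1 ≤ 2 * (1/x) * Real.exp (x/2) := by
        have : 2 * (1/x) * (x/2) = 1 := by field_simp
        calc 1 = 2 * (1/x) * (x/2) := this.symm
          _ ≤ _ := by gcongr
      nlinarith
    have e4 : 1 + x ≤ 4 * (1 / x * Real.exp x) := by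
      have : (1 + x) * x ≤ 4 * Real.exp x := by
        nlinarith [Real.quadratic_le_exp_of_nonneg hx0.le]
      calc 1 + x = (1 + x) * x * (1/x) := by field_simp
        _ ≤ 4 * Real.exp x * (1/x) := by gcongr
        _ = _ := by ring
    calc |F - α⁻¹ * Real.exp x| = |(F - α⁻¹ * (Real.exp x - 1 - x)) + (-(α⁻¹ * (1 + x)))| := by congr 1; ring
      _ ≤ |F - α⁻¹ * (Real.exp x - 1 - x)| + |-(α⁻¹ * (1 + x))| := abs_add_le _ _
      _ ≤ |C| * Real.exp (x/2) + α⁻¹ * (1 + x) := by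
        rw [abs_neg, abs_of_nonneg (by positivity : 0 ≤ α⁻¹ * (1 + x))]
        gcongr
        refine h2.trans ?_
        gcongr
        exact le_abs_self C
      _ ≤ |C| * (2 * (1 / x * Real.exp x)) + α⁻¹ * (4 * (1 / x * Real.exp x)) := by gcongr
      _ = _ := by ring
  | succ n ih =>
    intro b hb
    push_cast at hb
    obtain ⟨C1, h1⟩ := ih (b - 1) (by linarith)
    obtain ⟨C2, h2⟩ := ih b (by linarith)
    set c := r n - (b - 1) * α⁻¹ with hc
    refine ⟨α⁻¹ * C1 + |c| * (α⁻¹ ^ (n+1) + |C2|), fun x hx => ?_⟩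
    have hx0 : 0 < x := by linarith
    obtain ⟨s1, e1⟩ := h1 x hx
    obtain ⟨s2, e2⟩ := h2 x hx
    have hterm : (fun k : ℕ => (∏ i ∈ Finset.range (n+1), ((k:ℝ) + r i)) * (x ^ (α * k + b - 1) / Real.Gamma (α * k + b)))
        = fun k : ℕ => α⁻¹ * x * ((∏ i ∈ Finset.range n, ((k:ℝ) + r i)) * (x ^ (α * k + (b - 1) - 1) / Real.Gamma (α * k + (b - 1))))
          + c * ((∏ i ∈ Finset.range n, ((k:ℝ) + r i)) * (x ^ (α * k + b - 1) / Real.Gamma (α * k + b))) := by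
      ext k
      have hk : 0 ≤ α * k := by positivity
      have hn : (0:ℝ) ≤ n := by positivity
      have hpos : 0 < α * k + (b - 1) := by linarith
      have hG : Real.Gamma (α * k + b) = (α * k + (b - 1)) * Real.Gamma (α * k + (b - 1)) := by
        rw [← Real.Gamma_add_one hpos.ne']; congr 1; ring
      have hX : x ^ (α * k + b - 1) = x * x ^ (α * k + (b - 1) - 1) := by
        nth_rewrite 2 [← Real.rpow_one x]
        rw [← Real.rpow_add hx0]; congr 1; ring
      have hGp := (Real.Gamma_pos_of_pos hpos).ne'
      rw [Finset.prod_range_succ, hG, hX, hc]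
      generalize (∏ i ∈ Finset.range n, ((k:ℝ) + r i)) = P
      generalize x ^ (α * k + (b - 1) - 1) = Y
      generalize Real.Gamma (α * k + (b - 1)) = G at *
      have hne := hpos.ne'
      have hbe : b - 1 = (α * k + (b - 1)) - α * k := by ring
      generalize α * k + (b - 1) = m at *
      rw [hbe]
      field_simp
      ring
    rw [hterm]
    refine ⟨(s1.mul_left _).add (s2.mul_left _), ?_⟩
    rw [(s1.mul_left _).tsum_add (s2.mul_left _), tsum_mul_left, tsum_mul_left]
    set S1 := ∑' k : ℕ, (∏ i ∈ Finset.range n, ((k:ℝ) + r i)) * (x ^ (α * k + (b - 1) - 1) / Real.Gamma (α * k + (b - 1)))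
    set S2 := ∑' k : ℕ, (∏ i ∈ Finset.range n, ((k:ℝ) + r i)) * (x ^ (α * k + b - 1) / Real.Gamma (α * k + b))
    have hxx : x ^ (n+1) / x = x ^ n := by rw [pow_succ]; field_simp
    have hxx2 : x * (x ^ n / x) = x ^ n := by field_simp
    have hS2 : |S2| ≤ (α⁻¹ ^ (n+1) + |C2|) * (x ^ n * Real.exp x) := by
      have h3 : |S2| ≤ |S2 - α⁻¹ ^ (n + 1) * x ^ n * Real.exp x| + |α⁻¹ ^ (n + 1) * x ^ n * Real.exp x| := by
        have := abs_add_le (S2 - α⁻¹ ^ (n + 1) * x ^ n * Real.exp x) (α⁻¹ ^ (n + 1) * x ^ n * Real.exp x)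
        simpa using this
      rw [abs_of_nonneg (by positivity : 0 ≤ α⁻¹ ^ (n + 1) * x ^ n * Real.exp x)] at h3
      have h4 : C2 * (x ^ n / x * Real.exp x) ≤ |C2| * (x ^ n * Real.exp x) := by
        have : x ^ n / x ≤ x ^ n := div_le_self (by positivity) hx
        calc _ ≤ |C2| * (x ^ n / x * Real.exp x) := by gcongr; exact le_abs_self C2
          _ ≤ _ := by gcongr
      linarith
    calc _ = |α⁻¹ * x * (S1 - α⁻¹ ^ (n + 1) * x ^ n * Real.exp x) + c * S2| := by congr 1; ring
      _ ≤ α⁻¹ * x * |S1 - α⁻¹ ^ (n + 1) * x ^ n * Real.exp x| + |c| * |S2| := by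
        refine (abs_add_le _ _).trans (le_of_eq ?_)
        rw [abs_mul, abs_mul c, abs_of_pos (by positivity : 0 < α⁻¹ * x)]
      _ ≤ α⁻¹ * x * (C1 * (x ^ n / x * Real.exp x)) + |c| * ((α⁻¹ ^ (n+1) + |C2|) * (x ^ n * Real.exp x)) := by gcongr
      _ = α⁻¹ * C1 * (x * (x ^ n / x) * Real.exp x) + |c| * ((α⁻¹ ^ (n+1) + |C2|) * (x ^ n * Real.exp x)) := by ring
      _ = _ := by rw [hxx, hxx2]; ring

lemma poch_eq (γ k : ℕ) : Polynomial.eval ((γ:ℝ) + 1) (ascPochhammer ℝ k) / (k.factorial : ℝ) =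
    (∏ i ∈ Finset.range γ, ((k:ℝ) + (i + 1))) / (γ.factorial : ℝ) := by
  have h1 : Polynomial.eval ((γ:ℝ) + 1) (ascPochhammer ℝ k) = ((γ + 1).ascFactorial k : ℕ) := by
    rw [← ascPochhammer_nat_eq_ascFactorial, ascPochhammer_eval_cast]; push_cast; rfl
  have h2 : (∏ i ∈ Finset.range γ, ((k:ℝ) + (i + 1))) = ((k + 1).ascFactorial γ : ℕ) := by
    rw [Nat.ascFactorial_eq_prod_range]; push_cast
    apply Finset.prod_congr rfl; intros; ring
  have h3 := Nat.factorial_mul_ascFactorial γ k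
  have h4 := Nat.factorial_mul_ascFactorial k γ
  rw [add_comm k γ, ← h3] at h4
  have h5 : (k.factorial : ℝ) * ((k + 1).ascFactorial γ : ℕ) = γ.factorial * ((γ + 1).ascFactorial k : ℕ) := by exact_mod_cast h4
  have hk : (k.factorial : ℝ) ≠ 0 := by positivity
  have hg : (γ.factorial : ℝ) ≠ 0 := by positivity
  rw [h1, h2, div_eq_div_iff hk hg]
  linarith

lemma main_x {α β : ℝ} (γ : ℕ) (hα : 0 < α) (hα1 : α ≤ 1) :
    (fun x : ℝ => α ^ (γ + 1) * (γ.factorial : ℝ) * Real.exp (-x) * x ^ (-((γ : ℝ) + 1 - β))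
        * prabhakar α β ((γ : ℝ) + 1) (x ^ α) - 1) =O[atTop] (fun x : ℝ => x⁻¹) := by
  obtain ⟨K, hK⟩ := exists_nat_ge (((γ:ℝ) + 2 - β) / α)
  rw [div_le_iff₀ hα] at hK
  set r : ℕ → ℝ := fun i => (K:ℝ) + (i + 1) with hr
  obtain ⟨C, hC⟩ := poly_estimate hα hα1 r γ (α * K + β) (by linarith)
  set A := α ^ (γ + 1) * (γ.factorial : ℝ) with hA
  set term : ℝ → ℕ → ℝ := fun x k => (x ^ α) ^ k * Polynomial.eval ((γ:ℝ) + 1) (ascPochhammer ℝ k)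
    / ((k.factorial : ℝ) * Real.Gamma (α * (k : ℝ) + β)) with hterm
  set S : ℝ → ℝ := fun x => ∑' k : ℕ, (∏ i ∈ Finset.range γ, ((k:ℝ) + r i)) *
    (x ^ (α * k + (α * K + β) - 1) / Real.Gamma (α * k + (α * K + β))) with hS
  have hg : (γ.factorial : ℝ) ≠ 0 := by positivity
  have hshift : ∀ x : ℝ, 0 < x → (fun m : ℕ => term x (m + K)) = fun m : ℕ => (γ.factorial : ℝ)⁻¹ * x ^ (1 - β) *
      ((∏ i ∈ Finset.range γ, ((m:ℝ) + r i)) * (x ^ (α * m + (α * K + β) - 1) / Real.Gamma (α * m + (α * K + β)))) := by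
    intro x hx
    ext m
    have h1 : term x (m + K) = (x ^ α) ^ (m + K) * (Polynomial.eval ((γ:ℝ) + 1) (ascPochhammer ℝ (m + K)) / ((m+K).factorial : ℝ))
        / Real.Gamma (α * ((m + K : ℕ) : ℝ) + β) := by
      simp only [hterm]
      rw [mul_div_assoc, mul_div_assoc, div_div]
    rw [h1, poch_eq]
    have h2 : (x ^ α) ^ (m + K) = x ^ (1 - β) * x ^ (α * m + (α * K + β) - 1) := by
      rw [← Real.rpow_natCast, ← Real.rpow_mul hx.le, ← Real.rpow_add hx]
      congr 1; push_cast; ring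
    have h3 : α * ((m + K : ℕ) : ℝ) + β = α * m + (α * K + β) := by push_cast; ring
    have h4 : (∏ i ∈ Finset.range γ, (((m + K : ℕ):ℝ) + (i + 1))) = ∏ i ∈ Finset.range γ, ((m:ℝ) + r i) := by
      apply Finset.prod_congr rfl; intro i _; simp only [hr]; push_cast; ring
    rw [h2, h3, h4]
    field_simp
  have hsplit : ∀ x : ℝ, 1 ≤ x → prabhakar α β ((γ : ℝ) + 1) (x ^ α) =
      (∑ k ∈ Finset.range K, term x k) + (γ.factorial : ℝ)⁻¹ * x ^ (1 - β) * S x := by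
    intro x hx
    have hx0 : 0 < x := by linarith
    have hs : Summable (fun m : ℕ => term x (m + K)) := by
      rw [hshift x hx0]; exact (hC x hx).1.mul_left _
    have := ((summable_nat_add_iff K).1 hs).sum_add_tsum_nat_add K
    rw [hshift x hx0, tsum_mul_left] at this
    rw [this]
    rfl
  have hfin : (fun x : ℝ => ∑ k ∈ Finset.range K, A * Real.exp (-x) * x ^ (-((γ : ℝ) + 1 - β)) * term x k) =O[atTop] (fun x : ℝ => x⁻¹) := by
    refine IsBigO.fun_sum ?_
    intro k _
    have h0 := (isLittleO_exp_neg_mul_rpow_atTop (a := 1) one_pos (-1 + ((γ : ℝ) + 1 - β) - α * k)).isBigO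
    have h1 := (h0.mul (isBigO_refl (fun x : ℝ => x ^ (-((γ : ℝ) + 1 - β) + α * k)) atTop)).const_mul_left
      (A * (Polynomial.eval ((γ:ℝ) + 1) (ascPochhammer ℝ k) / ((k.factorial : ℝ) * Real.Gamma (α * (k : ℝ) + β))))
    refine h1.congr' ?_ ?_
    · filter_upwards [eventually_gt_atTop 0] with x hx
      simp only [hterm]
      rw [Real.rpow_add hx, ← Real.rpow_natCast, ← Real.rpow_mul hx.le]
      ring_nf
    · filter_upwards [eventually_gt_atTop 0] with x hx
      rw [← Real.rpow_add hx, ← Real.rpow_neg_one]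
      congr 1; ring
  have htail : (fun x : ℝ => α ^ (γ+1) * Real.exp (-x) * (x ^ γ)⁻¹ * (S x - α⁻¹ ^ (γ+1) * x ^ γ * Real.exp x)) =O[atTop] (fun x : ℝ => x⁻¹) := by
    apply IsBigO.of_bound (α ^ (γ+1) * C)
    filter_upwards [eventually_ge_atTop 1] with x hx
    have hx0 : 0 < x := by linarith
    have h := (hC x hx).2
    rw [norm_mul, Real.norm_of_nonneg (by positivity : 0 ≤ α ^ (γ+1) * Real.exp (-x) * (x ^ γ)⁻¹),
      Real.norm_of_nonneg (by positivity : 0 ≤ x⁻¹), Real.norm_eq_abs]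
    calc _ ≤ α ^ (γ+1) * Real.exp (-x) * (x ^ γ)⁻¹ * (C * (x ^ γ / x * Real.exp x)) := by gcongr
      _ = α ^ (γ+1) * C * x⁻¹ * (Real.exp (-x) * Real.exp x) * ((x ^ γ)⁻¹ * x ^ γ) := by ring
      _ = _ := by
        rw [← Real.exp_add, inv_mul_cancel₀ (by positivity)]; simp
  refine (hfin.add htail).congr' ?_ EventuallyEq.rfl
  filter_upwards [eventually_ge_atTop 1] with x hx
  have hx0 : 0 < x := by linarith
  rw [hsplit x hx, ← Finset.mul_sum]
  have h1 : x ^ (-((γ : ℝ) + 1 - β)) * x ^ (1 - β) = (x ^ γ)⁻¹ := by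
    rw [← Real.rpow_add hx0, ← Real.rpow_natCast, ← Real.rpow_neg hx0.le]
    congr 1; ring
  have h2 : α ^ (γ+1) * Real.exp (-x) * (x ^ γ)⁻¹ * (α⁻¹ ^ (γ+1) * x ^ γ * Real.exp x) = 1 := by
    have : α ^ (γ+1) * α⁻¹ ^ (γ+1) = 1 := by rw [← mul_pow, mul_inv_cancel₀ hα.ne', one_pow]
    calc _ = (α ^ (γ+1) * α⁻¹ ^ (γ+1)) * ((x ^ γ)⁻¹ * x ^ γ) * (Real.exp (-x) * Real.exp x) := by ring
      _ = 1 := by rw [this, ← Real.exp_add, inv_mul_cancel₀ (by positivity)]; simp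
  have h3 : A * (γ.factorial : ℝ)⁻¹ = α ^ (γ+1) := by rw [hA]; field_simp
  rw [mul_sub, h2, ← h1, ← h3]
  ring

end PrabhakarAux

open Asymptotics

/-- Eq. (2.5) of the paper: for `α ∈ (0,1]`, `β > 0` and a positive integer `γ`,
`E^{γ+1}_{α,β}(u) = e^{u^{1/α}} u^{(γ+1-β)/α} / (α^{γ+1} γ!) · (1 + O(u^{-1/α}))` as `u → ∞`. -/
theorem prabhakar_asymptotics
    (α β : ℝ) (γ : ℕ)
    (hα : α ∈ Set.Ioc (0 : ℝ) 1) (hβ : 0 < β) (hγ : 1 ≤ γ) :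
    (fun u : ℝ => α ^ (γ + 1) * (γ.factorial : ℝ) * Real.exp (-(u ^ (1 / α)))
        * u ^ (-(((γ : ℝ) + 1 - β) / α)) * prabhakar α β ((γ : ℝ) + 1) u - 1)
      =O[atTop] (fun u : ℝ => u ^ (-(1 / α))) := by
  have hα0 := hα.1
  have h := (main_x (β := β) γ hα.1 hα.2).comp_tendsto (tendsto_rpow_atTop (y := 1/α) (by positivity))
  refine h.congr' ?_ ?_
  · filter_upwards [eventually_gt_atTop 0] with u hu
    simp only [Function.comp]
    have h1 : (u ^ (1/α)) ^ α = u := by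
      rw [← Real.rpow_mul hu.le, one_div, inv_mul_cancel₀ hα0.ne', Real.rpow_one]
    have h2 : (u ^ (1/α)) ^ (-((γ : ℝ) + 1 - β)) = u ^ (-(((γ : ℝ) + 1 - β) / α)) := by
      rw [← Real.rpow_mul hu.le]; congr 1; ring
    rw [h1, h2]
  · filter_upwards [eventually_gt_atTop 0] with u hu
    simp only [Function.comp]
    rw [Real.rpow_neg hu.le]
end

section
/- Let α ∈ (0,1], β > 0, λ > 0 and let γ be a positive integer. Let δ, u : (0,∞) → (0,∞) be functions with δ(t) → ∞ and u(t) → 1 as t → ∞. Then lim_{t→∞} [ log( E^γ_{α,β}(λ u(t) δ(t)) / E^γ_{α,β}(λ δ(t)) ) − (λδ(t))^{1/α} ( (u(t))^{1/α} − 1 ) ] = 0. -/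
open Filter Topology

/-- Riemann sum comparison for quasi-concave functions. -/
lemma riemann_cmp (φ : ℝ → ℝ) (M : ℝ) (N : ℕ)
    (hc : ContinuousOn φ (Set.Icc 0 (N : ℝ)))
    (h0 : ∀ x, 0 ≤ x → 0 ≤ φ x) (hM : ∀ x, 0 ≤ x → φ x ≤ M)
    (hq : ∀ x y z, 0 ≤ x → x ≤ y → y ≤ z → min (φ x) (φ z) ≤ φ y) :
    |∑ k ∈ Finset.range N, φ k - ∫ x in (0:ℝ)..N, φ x| ≤ M := by
  have hN : (0:ℝ) ≤ N := Nat.cast_nonneg N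
  obtain ⟨x0, hx0, hmax⟩ := isCompact_Icc.exists_isMaxOn (Set.nonempty_Icc.2 hN) hc
  have hmax' : ∀ x : ℝ, 0 ≤ x → x ≤ N → φ x ≤ φ x0 := fun x h1 h2 => hmax ⟨h1, h2⟩
  have hup : ∀ x y, 0 ≤ x → x ≤ y → y ≤ x0 → φ x ≤ φ y := by
    intro x y h1 h2 h3
    have := hq x y x0 h1 h2 h3
    rwa [min_eq_left (hmax' x h1 (by linarith [hx0.2]))] at this
  have hdn : ∀ x y : ℝ, x0 ≤ x → x ≤ y → y ≤ N → φ y ≤ φ x := by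
    intro x y h1 h2 h3
    have := hq x0 x y hx0.1 h1 h2
    rwa [min_eq_right (hmax' y (by linarith [hx0.1]) h3)] at this
  have hA : MonotoneOn (fun x => φ (min x x0)) (Set.Icc 0 (0 + (N:ℝ))) := by
    intro x hx y hy hxy
    exact hup _ _ (le_min hx.1 hx0.1) (min_le_min_right _ hxy) (min_le_right _ _)
  have hB : AntitoneOn (fun x => φ (max x x0)) (Set.Icc 0 (0 + (N:ℝ))) := by
    intro x hx y hy hxy
    refine hdn _ _ (le_max_right _ _) (max_le_max_right _ hxy) (max_le ?_ hx0.2)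
    simpa using hy.2
  have hsum : ∀ x, φ x = φ (min x x0) + φ (max x x0) - φ x0 := by
    intro x
    rcases le_total x x0 with h | h
    · simp [h]
    · simp [h]
  have a1 := hA.sum_le_integral
  have a2 := hA.integral_le_sum
  have b1 := hB.sum_le_integral
  have b2 := hB.integral_le_sum
  have iA : IntervalIntegrable (fun x => φ (min x x0)) MeasureTheory.volume 0 N := by
    apply MonotoneOn.intervalIntegrable
    rw [Set.uIcc_of_le hN]; simpa using hA
  have iB : IntervalIntegrable (fun x => φ (max x x0)) MeasureTheory.volume 0 N := by
    apply AntitoneOn.intervalIntegrable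
    rw [Set.uIcc_of_le hN]; simpa using hB
  have hI : ∫ x in (0:ℝ)..N, φ x
      = (∫ x in (0:ℝ)..N, φ (min x x0)) + (∫ x in (0:ℝ)..N, φ (max x x0)) - N * φ x0 := by
    rw [← intervalIntegral.integral_add iA iB]
    rw [show (N:ℝ) * φ x0 = ∫ x in (0:ℝ)..N, φ x0 by simp]
    rw [← intervalIntegral.integral_sub (iA.add iB) (by simp)]
    exact intervalIntegral.integral_congr (fun x _ => hsum x)
  have hS : ∑ k ∈ Finset.range N, φ k
      = ∑ k ∈ Finset.range N, φ (min k x0) + ∑ k ∈ Finset.range N, φ (max k x0) - N * φ x0 := by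
    rw [← Finset.sum_add_distrib, show (N:ℝ) * φ x0 = ∑ k ∈ Finset.range N, φ x0 by simp,
      ← Finset.sum_sub_distrib]
    exact Finset.sum_congr rfl (fun k _ => hsum k)
  simp only [zero_add] at a1 a2 b1 b2
  have tA := Finset.sum_range_sub (fun k : ℕ => φ (min (k:ℝ) x0)) N
  have tB := Finset.sum_range_sub (fun k : ℕ => φ (max (k:ℝ) x0)) N
  rw [Finset.sum_sub_distrib] at tA tB
  have e1 := h0 (min ((0:ℕ):ℝ) x0) (le_min (by simp) hx0.1)
  have e2 := hM (min (N:ℝ) x0) (le_min (by simp) hx0.1)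
  have e3 := hM (max ((0:ℕ):ℝ) x0) (le_max_of_le_right hx0.1)
  have e4 := h0 (max (N:ℝ) x0) (le_max_of_le_right hx0.1)
  rw [hI, hS, abs_le]
  constructor <;> linarith

/-- the Poisson-type weight -/
noncomputable def hw (s y : ℝ) : ℝ := Real.exp (-s) * s ^ (y - 1) / Real.Gamma y

lemma hw_pos {s y : ℝ} (hs : 0 < s) (hy : 0 < y) : 0 < hw s y := by
  have := Real.Gamma_pos_of_pos hy
  unfold hw; positivity

lemma hw_cont {s : ℝ} (hs : 0 < s) : ContinuousOn (hw s) (Set.Ioi 0) := by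
  intro y hy
  have hy : 0 < y := hy
  apply ContinuousAt.continuousWithinAt
  unfold hw
  refine ContinuousAt.div ?_ ?_ (Real.Gamma_pos_of_pos hy).ne'
  · refine continuousAt_const.mul ?_
    exact ContinuousAt.rpow continuousAt_const (by fun_prop) (Or.inl hs.ne')
  · refine (Real.differentiableAt_Gamma fun m => ?_).continuousAt
    have : (0:ℝ) ≤ m := Nat.cast_nonneg m
    intro h; linarith

lemma hw_quasi {s : ℝ} (hs : 0 < s) {x y z : ℝ} (hx : 0 < x) (hxy : x ≤ y) (hyz : y ≤ z) :
    min (hw s x) (hw s z) ≤ hw s y := by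
  have hlog : ∀ y, 0 < y → Real.log (hw s y) = (-s + (y - 1) * Real.log s) - Real.log (Real.Gamma y) := by
    intro y hy
    have := Real.Gamma_pos_of_pos hy
    unfold hw
    rw [Real.log_div (by positivity) this.ne', Real.log_mul (by positivity) (by positivity),
      Real.log_exp, Real.log_rpow hs]
  have hconc : ConcaveOn ℝ (Set.Ioi 0) (fun y => (-s + (y - 1) * Real.log s) - Real.log (Real.Gamma y)) := by
    refine ConcaveOn.sub ?_ Real.convexOn_log_Gamma
    refine ⟨convex_Ioi 0, ?_⟩
    intro a _ b _ p q _ _ hpq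
    apply le_of_eq
    simp only [smul_eq_mul]
    have : q = 1 - p := by linarith
    subst this; ring
  have hy : 0 < y := by linarith
  have hz : 0 < z := by linarith
  have := hconc.min_le_of_mem_Icc (x := x) (y := z) (z := y) hx hz ⟨hxy, hyz⟩
  rw [← hlog x hx, ← hlog y hy, ← hlog z hz] at this
  rcases min_le_iff.1 this with h | h
  · exact min_le_of_left_le ((Real.log_le_log_iff (hw_pos hs hx) (hw_pos hs hy)).1 h)
  · exact min_le_of_right_le ((Real.log_le_log_iff (hw_pos hs hz) (hw_pos hs hy)).1 h)

lemma hw_int {s : ℝ} (hs : 0 < s) {a b : ℝ} (ha : 0 < a) (hb : 0 < b) :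
    IntervalIntegrable (hw s) MeasureTheory.volume a b := by
  apply ContinuousOn.intervalIntegrable
  apply (hw_cont hs).mono
  intro x hx
  rw [Set.mem_uIcc] at hx
  rcases hx with h | h
  · exact lt_of_lt_of_le ha h.1
  · exact lt_of_lt_of_le hb h.1

lemma hw_riemann {s M a b : ℝ} (hs : 0 < s) (hM : ∀ y, 2 ≤ y → hw s y ≤ M) (ha : 0 < a) (hb : 2 ≤ b)
    (N : ℕ) : |a * ∑ k ∈ Finset.range N, hw s (a * k + b) - ∫ x in b..(a * N + b), hw s x| ≤ a * M := by
  have h2 : ∀ x : ℝ, 0 ≤ x → 2 ≤ b + a * x := fun x hx => by nlinarith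
  have := riemann_cmp (fun x => hw s (b + a * x)) M N ?_ ?_ ?_ ?_
  · rw [intervalIntegral.integral_comp_add_mul _ ha.ne'] at this
    have h3 := mul_le_mul_of_nonneg_left this ha.le
    rw [← abs_of_pos ha, ← abs_mul, abs_of_pos ha, mul_sub, smul_eq_mul, mul_inv_cancel_left₀ ha.ne'] at h3
    simpa [add_comm] using h3
  · refine (hw_cont hs).comp (by fun_prop) ?_
    intro x hx
    have := h2 x hx.1
    exact Set.mem_Ioi.2 (by linarith)
  · intro x hx
    exact (hw_pos hs (by linarith [h2 x hx])).le
  · intro x hx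
    exact hM _ (h2 x hx)
  · intro x y z hx hxy hyz
    refine hw_quasi hs (by linarith [h2 x hx]) ?_ ?_ <;> gcongr

lemma hw_cmp {s M a b a' b' : ℝ} (hs : 0 < s) (hM : ∀ y, 2 ≤ y → hw s y ≤ M) (ha : 0 < a) (hb : 2 ≤ b)
    (ha' : 0 < a') (hb' : 2 ≤ b') (K : ℕ) :
    ∃ N : ℕ, a' * ∑ k ∈ Finset.range K, hw s (a' * k + b')
      ≤ (a + a' + (b - 2)) * M + a * ∑ k ∈ Finset.range N, hw s (a * k + b) := by
  obtain ⟨N, hN⟩ := exists_nat_ge ((a' * K + b') / a)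
  rw [div_le_iff₀ ha] at hN
  refine ⟨N, ?_⟩
  have h1 := (abs_le.1 (hw_riemann hs hM ha hb N)).1
  have h2 := (abs_le.1 (hw_riemann hs hM ha' hb' K)).2
  have hKp : 0 ≤ a' * K := by positivity
  have hNp : 0 ≤ a * N := by positivity
  have h3 : ∫ x in b'..(a' * K + b'), hw s x ≤ ∫ x in (2:ℝ)..(a * N + b), hw s x := by
    apply intervalIntegral.integral_mono_interval hb' (by linarith) (by linarith)
    · filter_upwards [MeasureTheory.ae_restrict_mem measurableSet_Ioc] with x hx
      exact (hw_pos hs (by linarith [hx.1])).le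
    · exact hw_int hs (by norm_num) (by linarith)
  have h4 : ∫ x in (2:ℝ)..(a * N + b), hw s x = (∫ x in (2:ℝ)..b, hw s x) + ∫ x in b..(a * N + b), hw s x :=
    (intervalIntegral.integral_add_adjacent_intervals (hw_int hs (by norm_num) (by linarith))
      (hw_int hs (by linarith) (by linarith))).symm
  have h5 : ∫ x in (2:ℝ)..b, hw s x ≤ (b - 2) * M := by
    have : ∫ x in (2:ℝ)..b, hw s x ≤ ∫ x in (2:ℝ)..b, M :=
      intervalIntegral.integral_mono_on hb (hw_int hs (by norm_num) (by linarith)) (by simp)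
        (fun x hx => hM x hx.1)
    simpa using this
  linarith

lemma pois_bound {s : ℝ} (hs : 0 < s) (n : ℕ) (hn : 1 ≤ n) :
    Real.exp (-s) * s ^ n / n.factorial ≤ 1 / Real.sqrt n := by
  have hn0 : (0:ℝ) < n := by exact_mod_cast hn
  have hst := Stirling.le_factorial_stirling n
  have hf : (0:ℝ) < n.factorial := by exact_mod_cast n.factorial_pos
  have hsq : 0 < Real.sqrt n := Real.sqrt_pos.2 hn0
  have h1 : Real.sqrt n ≤ Real.sqrt (2 * Real.pi * n) := by
    apply Real.sqrt_le_sqrt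
    nlinarith [Real.pi_gt_three]
  have h2 : Real.exp (-s) * s ^ n ≤ (n / Real.exp 1) ^ n := by
    have e : s / n ≤ Real.exp (s / n - 1) := by
      have := Real.add_one_le_exp (s / n - 1); linarith
    have e2 : (s / n) ^ n ≤ Real.exp (s / n - 1) ^ n := by gcongr
    rw [← Real.exp_nat_mul, div_pow, div_le_iff₀ (by positivity)] at e2
    rw [div_pow, ← Real.exp_nat_mul]
    calc Real.exp (-s) * s ^ n ≤ Real.exp (-s) * (Real.exp (n * (s / n - 1)) * n ^ n) := by gcongr
      _ = n ^ n / Real.exp (n * 1) := by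
        rw [← mul_assoc, ← Real.exp_add, div_eq_mul_inv (_ ^ n), ← Real.exp_neg, mul_comm]
        congr 2
        field_simp; ring
  rw [div_le_div_iff₀ hf hsq, one_mul]
  calc _ ≤ (n / Real.exp 1) ^ n * Real.sqrt (2 * Real.pi * n) := by gcongr
    _ ≤ _ := by rw [mul_comm]; exact hst

lemma pois_unif {ε : ℝ} (hε : 0 < ε) :
    ∀ᶠ s : ℝ in atTop, ∀ n : ℕ, Real.exp (-s) * s ^ n / n.factorial ≤ ε := by
  obtain ⟨N, hN⟩ := exists_nat_gt ((1 / ε) ^ 2)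
  have hfin : ∀ᶠ s : ℝ in atTop, ∀ n ∈ Finset.range N, Real.exp (-s) * s ^ n / n.factorial ≤ ε := by
    rw [Filter.eventually_all_finset]
    intro n _
    have := (Real.tendsto_pow_mul_exp_neg_atTop_nhds_zero n).div_const (n.factorial : ℝ)
    rw [zero_div] at this
    filter_upwards [this.eventually_le_const hε] with s hs
    rwa [mul_comm] 
  filter_upwards [hfin, eventually_gt_atTop 0] with s h1 hs n
  by_cases hn : n < N
  · exact h1 n (Finset.mem_range.2 hn)
  · have hn : N ≤ n := not_lt.1 hn
    have hN0 : (0:ℝ) < N := lt_of_le_of_lt (by positivity) hN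
    have : 1 ≤ n := by
      have : 0 < N := by exact_mod_cast hN0
      omega
    refine (pois_bound hs n this).trans ?_
    have h3 : 1 / ε ≤ Real.sqrt n := by
      apply Real.le_sqrt_of_sq_le
      have : (N:ℝ) ≤ n := by exact_mod_cast hn
      linarith
    rw [div_le_comm₀ hε (by exact lt_of_lt_of_le (by positivity) h3)] at h3
    exact h3

lemma hw_nat (s : ℝ) (n : ℕ) : hw s (n + 1) = Real.exp (-s) * s ^ n / n.factorial := by
  unfold hw
  rw [Real.Gamma_nat_eq_factorial, add_sub_cancel_right, Real.rpow_natCast]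

lemma hw_unif {ε : ℝ} (hε : 0 < ε) : ∀ᶠ s : ℝ in atTop, ∀ y, 2 ≤ y → hw s y ≤ ε := by
  filter_upwards [pois_unif (show 0 < ε / 3 by positivity), eventually_gt_atTop 0] with s h hs y hy
  obtain ⟨m, hm⟩ : ∃ m : ℕ, ⌊y⌋₊ = m + 1 :=
    ⟨⌊y⌋₊ - 1, by have := Nat.le_floor (n := 2) (by simpa using hy); omega⟩
  have hm1 : 1 ≤ m := by have := Nat.le_floor (n := 2) (by simpa using hy); omega
  have hm0 : (0:ℝ) < m := by exact_mod_cast hm1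
  have hl := Nat.floor_le (show 0 ≤ y by linarith)
  have hu := Nat.lt_floor_add_one y
  rw [hm] at hl hu
  push_cast at hl hu
  obtain ⟨θ, rfl⟩ : ∃ θ, y = m + 1 + θ := ⟨y - (m + 1), by ring⟩
  have hθ0 : 0 ≤ θ := by linarith
  have hθ1 : θ ≤ 1 := by linarith
  have hG : (m.factorial : ℝ) * (m:ℝ) ^ θ ≤ Real.Gamma (m + 1 + θ) := by
    rcases hθ0.eq_or_lt with h | h
    · subst h; simp [Real.Gamma_nat_eq_factorial]
    · have := Real.BohrMollerup.f_add_nat_ge (n := m + 1) Real.convexOn_log_Gamma (fun {y} hy => by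
        simp only [Function.comp]
        rw [Real.Gamma_add_one hy.ne', Real.log_mul hy.ne' (Real.Gamma_pos_of_pos hy).ne', add_comm])
        (by omega) h
      simp only [Function.comp] at this
      push_cast at this
      rw [Real.Gamma_nat_eq_factorial, add_sub_cancel_right, ← Real.log_rpow hm0,
        ← Real.log_mul (by positivity) (by positivity), Real.log_le_log_iff (by positivity)
          (Real.Gamma_pos_of_pos (by positivity))] at this
      exact this
  have hf : (0:ℝ) < m.factorial := by exact_mod_cast m.factorial_pos
  have hr : (s / m) ^ θ ≤ 1 + s / m := by
    calc (s / m) ^ θ ≤ (1 + s / m) ^ θ := by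
          apply Real.rpow_le_rpow (by positivity) _ hθ0
          linarith
      _ ≤ (1 + s / m) ^ (1:ℝ) := by
          apply Real.rpow_le_rpow_of_exponent_le _ hθ1
          have : 0 < s / m := by positivity
          linarith
      _ = _ := Real.rpow_one _
  have h1 := h m
  have h2 := h (m + 1)
  calc hw s (m + 1 + θ) ≤ Real.exp (-s) * s ^ (m + θ) / (m.factorial * (m:ℝ) ^ θ) := by
        unfold hw
        rw [show (m:ℝ) + 1 + θ - 1 = m + θ by ring]
        gcongr
    _ = Real.exp (-s) * s ^ m / m.factorial * (s / m) ^ θ := by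
        rw [Real.rpow_add hs, Real.rpow_natCast, Real.div_rpow hs.le hm0.le]
        field_simp
    _ ≤ Real.exp (-s) * s ^ m / m.factorial * (1 + s / m) := by gcongr
    _ = Real.exp (-s) * s ^ m / m.factorial
        + (Real.exp (-s) * s ^ (m+1) / (m+1).factorial) * ((m + 1) / m) := by
        rw [Nat.factorial_succ]; push_cast; field_simp; ring
    _ ≤ ε / 3 + ε / 3 * 2 := by
        gcongr
        rw [div_le_iff₀ hm0]
        have : (1:ℝ) ≤ m := by exact_mod_cast hm1
        linarith
    _ = ε := by ring

lemma hw_hasSum (s : ℝ) : HasSum (fun n : ℕ => hw s (1 * n + 2)) (1 - Real.exp (-s)) := by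
  have h : HasSum (fun n : ℕ => Real.exp (-s) * (s ^ n / n.factorial)) (Real.exp (-s) * Real.exp s) := by
    have := NormedSpace.expSeries_div_hasSum_exp s
    rw [← Real.exp_eq_exp_ℝ] at this
    exact this.mul_left _
  rw [← Real.exp_add, neg_add_cancel, Real.exp_zero, ← hasSum_nat_add_iff' 1] at h
  simp only [Finset.range_one, Finset.sum_singleton, pow_zero, Nat.factorial_zero, Nat.cast_one,
    div_one, mul_one] at h
  have e : (fun n : ℕ => hw s (1 * n + 2)) = fun n : ℕ => Real.exp (-s) * (s ^ (n + 1) / (n + 1).factorial) := by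
    funext n
    rw [show (1:ℝ) * n + 2 = ((n + 1 : ℕ) : ℝ) + 1 by push_cast; ring, hw_nat, mul_div_assoc]
  rw [e]; exact h

lemma hw_core {a b : ℝ} (ha : 0 < a) (hb : 2 ≤ b) :
    (∀ᶠ s : ℝ in atTop, Summable (fun k : ℕ => hw s (a * k + b))) ∧
    Tendsto (fun s => ∑' k : ℕ, hw s (a * k + b)) atTop (𝓝 (1 / a)) := by
  have key : ∀ M : ℝ, 0 < M → ∀ᶠ s : ℝ in atTop, Summable (fun k : ℕ => hw s (a * k + b)) ∧
      |a * ∑' k : ℕ, hw s (a * k + b) - 1| ≤ (a + b + 1) * M := by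
    intro M hM
    have hexp : Tendsto (fun s : ℝ => Real.exp (-s)) atTop (𝓝 0) := Real.tendsto_exp_neg_atTop_nhds_zero
    filter_upwards [hw_unif hM, eventually_gt_atTop 0, hexp.eventually_le_const hM] with s h hs he
    have hpos : ∀ k : ℕ, 0 ≤ hw s (a * k + b) := fun k => (hw_pos hs (by positivity)).le
    have hpos1 : ∀ k : ℕ, 0 ≤ hw s (1 * k + 2) := fun k => (hw_pos hs (by positivity)).le
    have hS1 := hw_hasSum s
    have hub : ∀ K : ℕ, ∑ k ∈ Finset.range K, hw s (a * k + b) ≤ ((1 + a) * M + 1) / a := by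
      intro K
      obtain ⟨N, hN⟩ := hw_cmp hs h one_pos le_rfl ha hb K
      have := hS1.summable.sum_le_tsum (Finset.range N) (fun k _ => hpos1 k)
      rw [hS1.tsum_eq] at this
      rw [le_div_iff₀ ha]
      have := Real.exp_pos (-s)
      linarith
    have hsum := summable_of_sum_range_le hpos hub
    refine ⟨hsum, ?_⟩
    have hU := hsum.tsum_le_of_sum_range_le hub
    rw [le_div_iff₀ ha] at hU
    have hL : 1 - Real.exp (-s) ≤ (a + 1 + (b - 2)) * M + a * ∑' k : ℕ, hw s (a * k + b) := by
      rw [← hS1.tsum_eq]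
      apply hS1.summable.tsum_le_of_sum_range_le
      intro K
      obtain ⟨N, hN⟩ := hw_cmp hs h ha hb one_pos le_rfl K
      have := hsum.sum_le_tsum (Finset.range N) (fun k _ => hpos k)
      have := mul_le_mul_of_nonneg_left this ha.le
      linarith
    rw [abs_le]
    constructor <;> nlinarith
  refine ⟨(key 1 one_pos).mono fun s h => h.1, ?_⟩
  have : Tendsto (fun s => a * ∑' k : ℕ, hw s (a * k + b)) atTop (𝓝 1) := by
    rw [Metric.tendsto_nhds]
    intro ε hε
    filter_upwards [key (ε / 2 / (a + b + 1)) (by positivity)] with s hs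
    rw [Real.dist_eq]
    refine hs.2.trans_lt ?_
    rw [mul_div_cancel₀ _ (by positivity)]
    linarith
  have := this.const_mul (1 / a)
  simp only [← mul_assoc, one_div, inv_mul_cancel₀ ha.ne', one_mul, mul_one] at this
  simpa using this

/-- terms of the series -/
noncomputable def pterm (α β γ s : ℝ) (k : ℕ) : ℝ :=
  (s ^ α) ^ k * Polynomial.eval γ (ascPochhammer ℝ k)
    / ((k.factorial : ℝ) * Real.Gamma (α * (k : ℝ) + β))

/-- the asymptotic property -/
def PGood (α β γ : ℝ) : Prop :=
  (∀ᶠ s : ℝ in atTop, Summable (pterm α β γ s)) ∧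
  ∃ C : ℝ, 0 < C ∧ Tendsto (fun s : ℝ => Real.exp (-s) * s ^ (β - γ) * ∑' k, pterm α β γ s k)
    atTop (𝓝 C)

lemma pterm_one {α β s : ℝ} (k : ℕ) :
    pterm α β 1 s k = (s ^ α) ^ k / Real.Gamma (α * k + β) := by
  unfold pterm
  have hf : (k.factorial : ℝ) ≠ 0 := by exact_mod_cast k.factorial_ne_zero
  rw [ascPochhammer_eval_one, mul_comm, mul_div_mul_left _ _ hf]

lemma pgood_base {α β : ℝ} (hα : 0 < α) (hβ : 2 ≤ β) : PGood α β 1 := by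
  obtain ⟨h1, h2⟩ := hw_core hα hβ
  have hE : ∀ s : ℝ, 0 < s → ∀ k : ℕ,
      Real.exp (-s) * s ^ (β - 1) * pterm α β 1 s k = hw s (α * k + β) := by
    intro s hs k
    rw [pterm_one, hw, ← Real.rpow_natCast, ← Real.rpow_mul hs.le,
      show α * k + β - 1 = (β - 1) + α * k by ring, Real.rpow_add hs]
    ring
  refine ⟨?_, 1 / α, by positivity, ?_⟩
  · filter_upwards [h1, eventually_gt_atTop 0] with s h hs
    have hc : Real.exp (-s) * s ^ (β - 1) ≠ 0 := by positivity
    rw [← summable_mul_left_iff hc]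
    simpa only [hE s hs] using h
  · refine h2.congr' ?_
    filter_upwards [eventually_gt_atTop 0] with s hs
    rw [← tsum_mul_left]
    simp only [hE s hs]

lemma pgood_shift {α β : ℝ} (h : PGood α (β + α) 1) : PGood α β 1 := by
  obtain ⟨h1, C, hC, h2⟩ := h
  have hE : ∀ s : ℝ, ∀ k : ℕ, pterm α β 1 s (k + 1) = s ^ α * pterm α (β + α) 1 s k := by
    intro s k
    rw [pterm_one, pterm_one, pow_succ,
      show α * ((k + 1 : ℕ) : ℝ) + β = α * k + (β + α) by push_cast; ring]
    ring
  have hS : ∀ᶠ s : ℝ in atTop, Summable (pterm α β 1 s) := by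
    filter_upwards [h1] with s h
    rw [← summable_nat_add_iff 1]
    simp only [hE]
    exact h.mul_left _
  refine ⟨hS, C, hC, ?_⟩
  have h3 : Tendsto (fun s : ℝ => s ^ (β - 1) * Real.exp (-1 * s) * (Real.Gamma β)⁻¹
      + Real.exp (-s) * s ^ (β + α - 1) * ∑' k, pterm α (β + α) 1 s k) atTop (𝓝 (0 * (Real.Gamma β)⁻¹ + C)) :=
    ((tendsto_rpow_mul_exp_neg_mul_atTop_nhds_zero (β - 1) 1 one_pos).mul_const _).add h2
  rw [zero_mul, zero_add] at h3
  refine h3.congr' ?_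
  filter_upwards [hS, eventually_gt_atTop 0] with s h hs
  rw [h.tsum_eq_zero_add]
  simp only [hE]
  rw [tsum_mul_left, pterm_one, show β + α - 1 = (β - 1) + α by ring, Real.rpow_add hs]
  simp
  ring

lemma pgood_one {α : ℝ} (hα : 0 < α) (β : ℝ) : PGood α β 1 := by
  have key : ∀ n : ℕ, ∀ β : ℝ, 2 ≤ β + n * α → PGood α β 1 := by
    intro n
    induction n with
    | zero => intro β h; exact pgood_base hα (by simpa using h)
    | succ n ih =>
      intro β h
      apply pgood_shift
      apply ih
      push_cast at h
      linarith
  obtain ⟨n, hn⟩ := exists_nat_ge ((2 - β) / α)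
  rw [div_le_iff₀ hα] at hn
  exact key n β (by linarith)

lemma inv_Gamma_sub_one (z : ℝ) : (Real.Gamma (z - 1))⁻¹ = (z - 1) * (Real.Gamma z)⁻¹ := by
  by_cases hz : z - 1 = 0
  · rw [hz]; simp
  · have := Real.Gamma_add_one hz
    rw [sub_add_cancel] at this
    rw [this, mul_inv, mul_inv_cancel_left₀ hz]

lemma asc_succ (γ : ℝ) (k : ℕ) : γ * Polynomial.eval (γ + 1) (ascPochhammer ℝ k)
    = (γ + k) * Polynomial.eval γ (ascPochhammer ℝ k) := by
  rw [mul_comm (γ + k), ← ascPochhammer_succ_eval, ascPochhammer_succ_left]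
  simp

lemma pgood_succ {α γ : ℝ} (hα : 0 < α) (hγ : 0 < γ) (h : ∀ β, PGood α β γ) (β : ℝ) :
    PGood α β (γ + 1) := by
  obtain ⟨a1, C, hC, a2⟩ := h (β - 1)
  obtain ⟨b1, D, hD, b2⟩ := h β
  have hE : ∀ s : ℝ, ∀ k : ℕ, pterm α β (γ + 1) s k
      = (α * γ)⁻¹ * (pterm α (β - 1) γ s k + (1 - β + α * γ) * pterm α β γ s k) := by
    intro s k
    unfold pterm
    have e1 := inv_Gamma_sub_one (α * k + β)
    have e2 : Polynomial.eval (γ + 1) (ascPochhammer ℝ k)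
        = γ⁻¹ * ((γ + k) * Polynomial.eval γ (ascPochhammer ℝ k)) := by
      rw [← asc_succ, inv_mul_cancel_left₀ hγ.ne']
    rw [← add_sub_assoc, e2]
    simp only [div_eq_mul_inv, mul_inv]
    rw [e1]
    field_simp
    ring
  refine ⟨?_, (α * γ)⁻¹ * C, by positivity, ?_⟩
  · filter_upwards [a1, b1] with s h1 h2
    have := (h1.add (h2.mul_left (1 - β + α * γ))).mul_left (α * γ)⁻¹
    exact this.congr (fun k => (hE s k).symm)
  · have h3 := (a2.add ((tendsto_inv_atTop_zero.mul b2).const_mul (1 - β + α * γ))).const_mul (α * γ)⁻¹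
    rw [zero_mul, mul_zero, add_zero] at h3
    refine h3.congr' ?_
    filter_upwards [a1, b1, eventually_gt_atTop 0] with s h1 h2 hs
    rw [tsum_congr (hE s), tsum_mul_left, h1.tsum_add (h2.mul_left _), tsum_mul_left,
      show β - 1 - γ = (β - (γ + 1)) by ring, show β - γ = (β - (γ + 1)) + 1 by ring,
      Real.rpow_add hs, Real.rpow_one]
    field_simp

lemma pgood_all {α : ℝ} (hα : 0 < α) (g : ℕ) : ∀ β, PGood α β ((g + 1 : ℕ) : ℝ) := by
  induction g with
  | zero => intro β; simpa using pgood_one hα β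
  | succ n ih =>
    intro β
    have := pgood_succ hα (by positivity) ih β
    rw [Nat.cast_succ (n + 1)]
    exact this


/-- Boundedness (indeed convergence to `0`) of `H1(t)` in Section 4.1 of the paper:
for `α ∈ (0,1]`, `β > 0`, `λ > 0`, a positive integer `γ`, and functions `δ(t) → ∞`,
`u(t) → 1`, one has
`log(E^γ_{α,β}(λu(t)δ(t)) / E^γ_{α,β}(λδ(t))) - (λδ(t))^{1/α}((u(t))^{1/α} - 1) → 0`. -/
theorem H1_limit_prabhakar
    (α β lam : ℝ) (γ : ℕ)
    (hα : α ∈ Set.Ioc (0 : ℝ) 1) (hβ : 0 < β) (hlam : 0 < lam) (hγ : 1 ≤ γ)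
    (δ u : ℝ → ℝ)
    (hδpos : ∀ t : ℝ, 0 < t → 0 < δ t) (hupos : ∀ t : ℝ, 0 < t → 0 < u t)
    (hδ : Tendsto δ atTop atTop) (hu : Tendsto u atTop (𝓝 1)) :
    Tendsto (fun t : ℝ =>
        Real.log (prabhakar α β (γ : ℝ) (lam * u t * δ t) / prabhakar α β (γ : ℝ) (lam * δ t))
          - (lam * δ t) ^ (1 / α) * ((u t) ^ (1 / α) - 1))
      atTop (𝓝 0) := by
  have hα0 : 0 < α := hα.1
  obtain ⟨g, rfl⟩ : ∃ g, γ = g + 1 := ⟨γ - 1, by omega⟩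
  obtain ⟨-, C, hC, hG⟩ := pgood_all hα0 g β
  set c : ℝ := ((g + 1 : ℕ) : ℝ) with hc
  set G : ℝ → ℝ := fun s : ℝ => Real.exp (-s) * s ^ (β - c) * ∑' k, pterm α β c s k with hGdef
  have hx2 : Tendsto (fun t => lam * δ t) atTop atTop := hδ.const_mul_atTop hlam
  have hx1 : Tendsto (fun t => lam * u t * δ t) atTop atTop := by
    have : Tendsto (fun t => lam * u t) atTop (𝓝 (lam * 1)) := hu.const_mul lam
    exact this.pos_mul_atTop (by simpa using hlam) hδ
  have hr : Tendsto (fun x : ℝ => x ^ (1 / α)) atTop atTop := tendsto_rpow_atTop (by positivity)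
  have hlG : Tendsto (fun s => Real.log (G s)) atTop (𝓝 (Real.log C)) := hG.log hC.ne'
  have hl1 := hlG.comp (hr.comp hx1)
  have hl2 := hlG.comp (hr.comp hx2)
  have hlu : Tendsto (fun t => Real.log (u t)) atTop (𝓝 0) := by
    simpa using hu.log one_ne_zero
  have hfin := (hl1.sub hl2).add (hlu.const_mul ((c - β) / α))
  rw [sub_self, mul_zero, add_zero] at hfin
  have hlogE : ∀ x : ℝ, 0 < x → 0 < G (x ^ (1 / α)) →
      0 < prabhakar α β c x ∧
      Real.log (prabhakar α β c x) =
        Real.log (G (x ^ (1 / α))) + x ^ (1 / α) + (c - β) / α * Real.log x := by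
    intro x hx hGx
    have hs : 0 < x ^ (1 / α) := by positivity
    have e : ∑' k, pterm α β c (x ^ (1 / α)) k = prabhakar α β c x := by
      unfold pterm prabhakar
      rw [← Real.rpow_mul hx.le, one_div_mul_cancel hα0.ne', Real.rpow_one]
    have e2 : G (x ^ (1 / α))
        = Real.exp (-(x ^ (1 / α))) * (x ^ (1 / α)) ^ (β - c) * prabhakar α β c x := by
      rw [← e]
    have hp : 0 < prabhakar α β c x := by
      rw [e2] at hGx
      exact (pos_iff_pos_of_mul_pos hGx).1 (by positivity)
    refine ⟨hp, ?_⟩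
    rw [e2, Real.log_mul (by positivity) hp.ne', Real.log_mul (by positivity) (by positivity),
      Real.log_exp, Real.log_rpow hs, Real.log_rpow hx]
    ring
  have hpos : ∀ᶠ s in atTop, 0 < G s := hG.eventually_const_lt hC
  refine hfin.congr' ?_
  filter_upwards [(hr.comp hx1).eventually hpos, (hr.comp hx2).eventually hpos,
    eventually_gt_atTop 0] with t h1 h2 ht
  have hdt := hδpos t ht
  have hut := hupos t ht
  obtain ⟨p1, l1⟩ := hlogE (lam * u t * δ t) (by positivity) h1
  obtain ⟨p2, l2⟩ := hlogE (lam * δ t) (by positivity) h2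
  rw [Real.log_div p1.ne' p2.ne', l1, l2]
  have e3 : lam * u t * δ t = (lam * δ t) * u t := by ring
  have e4 : (lam * u t * δ t) ^ (1 / α) = (lam * δ t) ^ (1 / α) * (u t) ^ (1 / α) := by
    rw [e3, Real.mul_rpow (by positivity) hut.le]
  have e5 : Real.log (lam * u t * δ t) = Real.log (lam * δ t) + Real.log (u t) := by
    rw [e3, Real.log_mul (by positivity) hut.ne']
  rw [e5]
  simp only [Function.comp]
  generalize Real.log (G ((lam * u t * δ t) ^ (1 / α))) = q
  rw [e4]
  ring
end

section
/- Let α ∈ (0,1], β > 0, λ > 0 and let γ be a positive integer. Then lim_{s→∞} s^{1/(2α)} · ( λ^{1/α}/α − s^{1−1/α} λ γ E^{γ+1}_{α,α+β}(λs) / E^γ_{α,β}(λs) ) = 0. -/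
open Filter Topology

noncomputable def hh (t x : ℝ) : ℝ := x ^ (t - 1) / Real.Gamma t

lemma hh_succ (t : ℝ) {x : ℝ} (hx : 0 < x) : t * hh (t + 1) x = x * hh t x := by
  unfold hh
  rcases eq_or_ne t 0 with rfl | ht
  · simp [Real.Gamma_zero]
  · rw [Real.Gamma_add_one ht, show t + 1 - 1 = (t - 1) + 1 by ring, Real.rpow_add_one hx.ne',
      mul_div_assoc', mul_div_mul_left _ _ ht]
    ring

lemma hh_pos {t x : ℝ} (ht : 0 < t) (hx : 0 < x) : 0 < hh t x :=
  div_pos (Real.rpow_pos_of_pos hx _) (Real.Gamma_pos_of_pos ht)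

lemma log_hh {t x : ℝ} (ht : 0 < t) (hx : 0 < x) :
    Real.log (hh t x) = (t - 1) * Real.log x - Real.log (Real.Gamma t) := by
  unfold hh
  rw [Real.log_div (Real.rpow_pos_of_pos hx _).ne' (Real.Gamma_pos_of_pos ht).ne',
    Real.log_rpow hx]

lemma concave_log_hh {x : ℝ} (hx : 0 < x) :
    ConcaveOn ℝ (Set.Ioi 0) (fun t => Real.log (hh t x)) := by
  have h1 : ConcaveOn ℝ (Set.Ioi (0:ℝ)) (fun t : ℝ => (t - 1) * Real.log x) := by
    refine ⟨convex_Ioi 0, ?_⟩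
    intro a _ b _ p q _ _ hpq
    simp only [smul_eq_mul]
    have : q = 1 - p := by linarith
    subst this
    apply le_of_eq; ring
  have h2 := h1.sub Real.convexOn_log_Gamma
  refine h2.congr ?_
  intro t ht
  simp only [Pi.sub_apply, Function.comp]
  exact (log_hh ht hx).symm

lemma exists_mode {x : ℝ} (hx : 0 < x) : ∃ m, x ≤ m ∧ m ≤ x + 1 ∧ (∀ t, 0 < t → hh t x ≤ hh m x) ∧
    (∀ s t, 0 < s → s ≤ t → t ≤ m → hh s x ≤ hh t x) ∧
    (∀ s t, m ≤ s → s ≤ t → hh t x ≤ hh s x) := by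
  have hc := concave_log_hh hx
  have hcont : ContinuousOn (fun t => hh t x) (Set.Icc x (x+1)) := by
    intro t ht
    have htp : 0 < t := lt_of_lt_of_le hx ht.1
    apply ContinuousAt.continuousWithinAt
    unfold hh
    apply ContinuousAt.div
    · exact (Real.continuousAt_const_rpow hx.ne').comp (by fun_prop)
    · refine (Real.differentiableAt_Gamma ?_).continuousAt
      intro n hn
      have : (0:ℝ) ≤ n := n.cast_nonneg
      linarith
    · exact (Real.Gamma_pos_of_pos htp).ne'
  obtain ⟨m, hm, hmax⟩ := isCompact_Icc.exists_isMaxOn ⟨x, by simp⟩ hcont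
  have heq : hh (x+1) x = hh x x := mul_left_cancel₀ hx.ne' (hh_succ x hx)
  have hmp : 0 < m := lt_of_lt_of_le hx hm.1
  have hxm : hh x x ≤ hh m x := hmax (by simp)
  have hall : ∀ t, 0 < t → hh t x ≤ hh m x := by
    intro t ht
    rcases lt_or_ge t x with h | h
    · refine le_trans ?_ hxm
      have := hc.slope_anti_adjacent (x := t) (y := x) (z := x+1) ht (by simp; linarith) h (by linarith)
      simp only [heq, sub_self, zero_div] at this
      have h3 := (div_nonneg_iff.1 this)
      have h4 : Real.log (hh t x) ≤ Real.log (hh x x) := by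
        rcases h3 with h3 | h3 <;> linarith [h3.1, h3.2]
      exact (Real.log_le_log_iff (hh_pos ht hx) (hh_pos hx hx)).1 h4
    · rcases le_or_gt t (x+1) with h' | h'
      · exact hmax ⟨h, h'⟩
      · refine le_trans ?_ hxm
        have := hc.slope_anti_adjacent (x := x) (y := x+1) (z := t) hx ht (by linarith) h'
        simp only [heq, sub_self, zero_div] at this
        have h3 := (div_nonpos_iff.1 this)
        have h4 : Real.log (hh t x) ≤ Real.log (hh x x) := by
          rcases h3 with h3 | h3 <;> linarith [h3.1, h3.2]
        exact (Real.log_le_log_iff (hh_pos ht hx) (hh_pos hx hx)).1 h4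
  refine ⟨m, hm.1, hm.2, hall, ?_, ?_⟩
  · intro s t hs hst htm
    have ht : 0 < t := by linarith
    have := hc.min_le_of_mem_Icc (x := s) (y := m) hs hmp ⟨hst, htm⟩
    rw [min_eq_left (Real.log_le_log (hh_pos hs hx) (hall s hs))] at this
    exact (Real.log_le_log_iff (hh_pos hs hx) (hh_pos ht hx)).1 this
  · intro s t hs hst
    have hs' : 0 < s := by linarith
    have ht : 0 < t := by linarith
    have := hc.min_le_of_mem_Icc (x := m) (y := t) hmp ht ⟨hs, hst⟩
    rw [min_eq_right (Real.log_le_log (hh_pos ht hx) (hall t ht))] at this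
    exact (Real.log_le_log_iff (hh_pos ht hx) (hh_pos hs' hx)).1 this

lemma summable_hh_pos {α b x : ℝ} (hα : 0 < α) (hb : 0 < b) (hx : 0 < x) :
    Summable (fun k : ℕ => hh (α * k + b) x) := by
  obtain ⟨m, -, -, hm, -, -⟩ := exists_mode (x := 2 * x) (by linarith)
  have hr : ((1/2 : ℝ) ^ α) < 1 := Real.rpow_lt_one (by norm_num) (by norm_num) hα
  have hs := (summable_geometric_of_lt_one (Real.rpow_nonneg (by norm_num) α) hr).mul_left
    (hh m (2*x) * (1/2 : ℝ) ^ (b - 1))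
  refine Summable.of_nonneg_of_le (fun k => (hh_pos (by positivity) hx).le) (fun k => ?_) hs
  have ht : 0 < α * k + b := by positivity
  have h1 := hm _ ht
  have h2 : hh (α * k + b) x = hh (α * k + b) (2*x) * ((1/2 : ℝ) ^ (b - 1) * ((1/2 : ℝ) ^ α) ^ k) := by
    rw [← Real.rpow_natCast, ← Real.rpow_mul (by norm_num), ← Real.rpow_add (by norm_num)]
    unfold hh
    rw [div_mul_eq_mul_div, show b - 1 + α * k = α * k + b - 1 by ring,
      ← Real.mul_rpow (by linarith) (by norm_num)]
    congr 2; ring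
  rw [h2, mul_assoc]
  exact mul_le_mul_of_nonneg_right h1 (by positivity)

lemma summable_hh {α x : ℝ} (b : ℝ) (hα : 0 < α) (hx : 0 < x) :
    Summable (fun k : ℕ => hh (α * k + b) x) := by
  obtain ⟨n, hn⟩ := exists_nat_gt (-b / α)
  rw [← summable_nat_add_iff n]
  rw [div_lt_iff₀ hα] at hn
  have := summable_hh_pos (α := α) (b := b + n * α) hα (by linarith) hx
  refine this.congr fun k => ?_
  congr 1; push_cast; ring

noncomputable def ff (α b x : ℝ) : ℝ := ∑' k : ℕ, hh (α * k + b) x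

lemma ff_step {α x : ℝ} (b : ℝ) (hα : 0 < α) (hx : 0 < x) :
    ff α b x = hh b x + ff α (b + α) x := by
  unfold ff
  rw [(summable_hh b hα hx).tsum_eq_zero_add]
  congr 1
  · simp
  · refine tsum_congr fun k => ?_
    congr 1; push_cast; ring

lemma ff_pos {α b x : ℝ} (hα : 0 < α) (hb : 0 < b) (hx : 0 < x) : 0 < ff α b x :=
  (summable_hh b hα hx).tsum_pos (fun k => (hh_pos (by positivity) hx).le) 0
    (hh_pos (by simpa using hb) hx)

lemma ff_interlace {α b b' x m : ℝ} (hα : 0 < α) (hb : 0 < b) (hx : 0 < x)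
    (hbb : b ≤ b') (hbb' : b' ≤ b + α) (hm : b < m)
    (hmax : ∀ t, 0 < t → hh t x ≤ hh m x)
    (hmono : ∀ s t, 0 < s → s ≤ t → t ≤ m → hh s x ≤ hh t x)
    (hanti : ∀ s t, m ≤ s → s ≤ t → hh t x ≤ hh s x) :
    ff α b' x ≤ ff α b x + hh m x := by
  have hb' : 0 < b' := by linarith
  have hK : 0 < ⌈(m - b) / α⌉₊ := Nat.ceil_pos.2 (div_pos (by linarith) hα)
  obtain ⟨n, hn⟩ : ∃ n, ⌈(m - b) / α⌉₊ = n + 1 := ⟨_, (Nat.succ_pred_eq_of_pos hK).symm⟩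
  have hlo : α * n + b ≤ m := by
    have : n < ⌈(m - b) / α⌉₊ := by omega
    rw [Nat.lt_ceil, lt_div_iff₀ hα] at this
    linarith
  have hhi : m ≤ α * (n + 1) + b := by
    have := Nat.le_ceil ((m - b) / α)
    rw [hn, div_le_iff₀ hα] at this
    push_cast at this
    linarith
  unfold ff
  rw [← (summable_hh b hα hx).sum_add_tsum_nat_add (n + 1),
    ← (summable_hh b' hα hx).sum_add_tsum_nat_add (n + 1), Finset.sum_range_succ,
    Finset.sum_range_succ' (fun k : ℕ => hh (α * k + b) x)]
  have h1 : ∑ k ∈ Finset.range n, hh (α * k + b') x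
      ≤ ∑ k ∈ Finset.range n, hh (α * (k + 1 : ℕ) + b) x := by
    refine Finset.sum_le_sum fun k hk => ?_
    have hk' : (k : ℝ) + 1 ≤ n := by exact_mod_cast Finset.mem_range.1 hk
    have := mul_le_mul_of_nonneg_left hk' hα.le
    refine hmono _ _ (by positivity) ?_ ?_
    · push_cast; linarith
    · push_cast; linarith
  have h2 : ∑' k : ℕ, hh (α * (k + (n + 1) : ℕ) + b') x ≤
      ∑' k : ℕ, hh (α * (k + (n + 1) : ℕ) + b) x := by
    have q1 := (summable_nat_add_iff (f := fun k : ℕ => hh (α * k + b') x) (n+1)).2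
      (summable_hh b' hα hx)
    have q2 := (summable_nat_add_iff (f := fun k : ℕ => hh (α * k + b) x) (n+1)).2
      (summable_hh b hα hx)
    refine Summable.tsum_le_tsum (fun k => ?_) q1 q2
    have := mul_nonneg hα.le (k.cast_nonneg (α := ℝ))
    refine hanti _ _ ?_ ?_
    · push_cast; linarith
    · push_cast; linarith
  have h3 := hmax (α * n + b') (by positivity)
  have h4 : 0 ≤ hh (α * (0:ℕ) + b) x := (hh_pos (by positivity) hx).le
  linarith

lemma ff_iter {α x : ℝ} (b : ℝ) (hα : 0 < α) (hx : 0 < x) (n : ℕ) :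
    ff α b x = (∑ k ∈ Finset.range n, hh (α * k + b) x) + ff α (b + n * α) x := by
  unfold ff
  rw [← (summable_hh b hα hx).sum_add_tsum_nat_add n]
  congr 1
  refine tsum_congr fun k => ?_
  congr 1; push_cast; ring

/-- all reference bounds, at a fixed large `x` -/
lemma ff_lower {α b x m : ℝ} (hα : 0 < α) (hα1 : α ≤ 1) (hb : 0 < b) (hx : 16 ≤ x)
    (hm : b < m) (hxm : x ≤ m) (hmx : m ≤ x + 1)
    (hanti : ∀ s t, m ≤ s → s ≤ t → hh t x ≤ hh s x) :
    hh m x ≤ 8 / √x * ff α b x := by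
  have hx0 : 0 < x := by linarith
  have hmp : 0 < m := by linarith
  have hsq : 4 ≤ √x := Real.le_sqrt_of_sq_le (by norm_num; linarith)
  have hsx : √x * √x = x := Real.mul_self_sqrt hx0.le
  set J := ⌊√x / 2⌋₊ with hJ
  have hJ1 : (J : ℝ) ≤ √x / 2 := Nat.floor_le (by positivity)
  have hJ2 : √x / 2 < J + 1 := Nat.lt_floor_add_one _
  have key : ∀ j : ℕ, j ≤ J → hh m x * (1 - j * (J + 1) / x) ≤ hh (m + j) x := by
    intro j
    induction j with
    | zero => intro _; simp
    | succ j ih =>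
      intro hj
      have ih := ih (by omega)
      have hs := hh_succ (m + j) hx0
      have hjJ : (j : ℝ) + 1 ≤ J := by exact_mod_cast hj
      have hj0 : (0:ℝ) ≤ j := j.cast_nonneg
      have hp := hh_pos (t := m + j) (by positivity) hx0
      have hM := hh_pos hmp hx0
      have e : hh (m + (j + 1 : ℕ)) x = hh (m + j) x * (x / (m + j)) := by
        have : m + (j + 1 : ℕ) = m + j + 1 := by push_cast; ring
        rw [this]; field_simp; linarith
      rw [e]
      have h1 : 1 - ((J:ℝ) + 1) / x ≤ x / (m + j) := by
        rw [le_div_iff₀ (by positivity), sub_mul, one_mul, div_mul_eq_mul_div,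
          sub_le_iff_le_add, ← sub_le_iff_le_add', le_div_iff₀ hx0]
        nlinarith
      have h2 : ((J:ℝ) + 1) / x ≤ 1 := by rw [div_le_one hx0]; nlinarith
      calc hh m x * (1 - ((j + 1 : ℕ) : ℝ) * (J + 1) / x)
          ≤ hh m x * ((1 - j * (J + 1) / x) * (1 - ((J:ℝ) + 1) / x)) := by
            apply mul_le_mul_of_nonneg_left _ hM.le
            have : 0 ≤ (j * (J + 1) / x) * (((J:ℝ) + 1) / x) := by positivity
            push_cast
            have e2 : ((j:ℝ) + 1) * (J + 1) / x = j * (J + 1) / x + (J + 1) / x := by ring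
            rw [e2]; nlinarith
        _ = (hh m x * (1 - j * (J + 1) / x)) * (1 - ((J:ℝ) + 1) / x) := by ring
        _ ≤ hh (m + j) x * (1 - ((J:ℝ) + 1) / x) := mul_le_mul_of_nonneg_right ih (by linarith)
        _ ≤ _ := mul_le_mul_of_nonneg_left h1 hp.le
  have hhalf : hh m x / 2 ≤ hh (m + J) x := by
    refine le_trans ?_ (key J le_rfl)
    have hM := hh_pos hmp hx0
    have : (J:ℝ) * (J + 1) / x ≤ 1 / 2 := by
      rw [div_le_iff₀ hx0]; nlinarith [J.cast_nonneg (α := ℝ)]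
    nlinarith
  set K := ⌈(m - b) / α⌉₊ with hKd
  have hK1 : m ≤ α * K + b := by
    have := Nat.le_ceil ((m - b) / α)
    rw [div_le_iff₀ hα] at this
    linarith
  have hK2 : α * K + b ≤ m + 1 := by
    have := Nat.ceil_lt_add_one (a := (m - b) / α) (div_nonneg (by linarith) hα.le)
    rw [← hKd, ← sub_lt_iff_lt_add, lt_div_iff₀ hα] at this
    linarith
  have hsum : ∑ j ∈ Finset.range J, hh (α * (j + K : ℕ) + b) x ≤ ff α b x := by
    have h1 := (summable_hh b hα hx0).sum_add_tsum_nat_add K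
    have h2 := ((summable_nat_add_iff K).2 (summable_hh b hα hx0)).sum_le_tsum (Finset.range J)
      (fun k _ => (hh_pos (by positivity) hx0).le)
    have h3 : 0 ≤ ∑ k ∈ Finset.range K, hh (α * k + b) x :=
      Finset.sum_nonneg fun k _ => (hh_pos (by positivity) hx0).le
    unfold ff
    linarith
  have hsum2 : (J : ℝ) * (hh m x / 2) ≤ ∑ j ∈ Finset.range J, hh (α * (j + K : ℕ) + b) x := by
    have := Finset.card_nsmul_le_sum (Finset.range J) (fun j => hh (α * (j + K : ℕ) + b) x)
      (hh m x / 2) (fun j hj => by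
        refine hhalf.trans (hanti _ _ ?_ ?_)
        · push_cast; nlinarith [j.cast_nonneg (α := ℝ)]
        · have : (j : ℝ) + 1 ≤ J := by exact_mod_cast Finset.mem_range.1 hj
          push_cast; nlinarith [j.cast_nonneg (α := ℝ)])
    simpa using this
  have hM := hh_pos hmp hx0
  rw [div_mul_eq_mul_div, le_div_iff₀ (by positivity)]
  have : √x / 4 ≤ J := by linarith
  nlinarith

lemma ff_close {α b b' x m : ℝ} (hα : 0 < α) (hb : 0 < b) (hx : 0 < x)
    (hbb : b ≤ b') {n : ℕ} (hn : b + n * α ≤ b') (hn' : b' ≤ b + (n + 1) * α) (hm : b' < m)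
    (hbig : (n + 1) * (b + (n + 1) * α) ≤ x)
    (hmax : ∀ t, 0 < t → hh t x ≤ hh m x)
    (hmono : ∀ s t, 0 < s → s ≤ t → t ≤ m → hh s x ≤ hh t x)
    (hanti : ∀ s t, m ≤ s → s ≤ t → hh t x ≤ hh s x) :
    |ff α b' x - ff α b x| ≤ 2 * hh m x := by
  have hb' : 0 < b' := by linarith
  have hM := hh_pos (t := m) (x := x) (by linarith) hx
  have h1 := ff_interlace (b := b + n * α) (b' := b') hα (by positivity) hx hn (by linarith)
    (by linarith) hmax hmono hanti
  have h2 := ff_interlace (b := b') (b' := b + (n + 1) * α) hα hb' hx hn' (by linarith)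
    (by linarith) hmax hmono hanti
  have h3 := ff_iter b hα hx n
  have h4 := ff_iter b hα hx (n + 1)
  have h5 : 0 ≤ ∑ k ∈ Finset.range n, hh (α * k + b) x :=
      Finset.sum_nonneg fun k _ => (hh_pos (by positivity) hx).le
  have h6 : ∑ k ∈ Finset.range (n + 1), hh (α * k + b) x ≤ hh m x := by
    have := Finset.sum_le_card_nsmul (Finset.range (n + 1)) (fun k : ℕ => hh (α * k + b) x)
      ((b + (n + 1) * α) / x * hh m x) (fun k hk => by
        have hk' : (k : ℝ) + 1 ≤ n + 1 := by exact_mod_cast Finset.mem_range.1 hk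
        have ht : 0 < α * k + b := by positivity
        have e := hh_succ (α * k + b) hx
        have h7 := hmax (α * k + b + 1) (by positivity)
        have h8 : α * k + b ≤ b + (n + 1) * α := by nlinarith
        rw [div_mul_eq_mul_div, le_div_iff₀ hx, mul_comm, ← e]
        exact mul_le_mul h8 h7 (hh_pos (by positivity) hx).le (by positivity))
    refine this.trans ?_
    simp only [Finset.card_range, nsmul_eq_mul]
    push_cast
    rw [← mul_assoc, ← mul_div_assoc]
    have : ((n:ℝ) + 1) * (b + (n + 1) * α) / x ≤ 1 := (div_le_one hx).2 hbig
    nlinarith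
  push_cast at h4
  rw [abs_le]; constructor <;> linarith

lemma ff_convex {α b x : ℝ} (hα : 0 < α) (hb : 0 < b) (hx : 0 < x) :
    -(2 / x) * ff α (b + 2) x ≤ ff α b x - 2 * ff α (b + 1) x + ff α (b + 2) x := by
  have s0 := summable_hh b hα hx
  have s1 := summable_hh (b+1) hα hx
  have s2 := summable_hh (b+2) hα hx
  have e : ff α b x - 2 * ff α (b + 1) x + ff α (b + 2) x =
      ∑' k : ℕ, (hh (α * k + b) x - 2 * hh (α * k + (b + 1)) x + hh (α * k + (b + 2)) x) := by
    unfold ff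
    rw [← tsum_mul_left, ← s0.tsum_sub (s1.mul_left 2), (s0.sub (s1.mul_left 2)).tsum_add s2]
  rw [e]
  unfold ff
  rw [← tsum_mul_left]
  refine Summable.tsum_le_tsum (fun k => ?_) (s2.mul_left _) ((s0.sub (s1.mul_left 2)).add s2)
  have ht : 0 < α * k + b := by positivity
  rw [← add_assoc, ← add_assoc]
  generalize α * k + b = t at ht
  have e1 := hh_succ t hx
  have e2 := hh_succ (t + 1) hx
  rw [show t + 1 + 1 = t + 2 by ring] at e2
  have hp := hh_pos (t := t + 2) (x := x) (by linarith) hx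
  have e1' : hh (t + 1) x = (t + 1) * hh (t + 2) x / x := by field_simp; linarith
  have e0' : hh t x = t * ((t + 1) * hh (t + 2) x) / x ^ 2 := by
    rw [e1'] at e1; field_simp; field_simp at e1; linarith
  rw [e0', e1', ← sub_nonneg]
  have : t * ((t + 1) * hh (t + 2) x) / x ^ 2 - 2 * ((t + 1) * hh (t + 2) x / x) + hh (t + 2) x
      - -(2 / x) * hh (t + 2) x = hh (t + 2) x * ((t - x) ^ 2 + t) / x ^ 2 := by
    field_simp; ring
  rw [this]
  positivity

lemma disc_convex (a : ℕ → ℝ) (N : ℕ) (C η : ℝ) (hη : 0 ≤ η)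
    (hC : ∀ i ≤ 2 * N, |a i| ≤ C)
    (hc : ∀ i ≤ 2 * N, -η ≤ a i - 2 * a (i + 1) + a (i + 2)) :
    N * |a (N + 1) - a N| ≤ 2 * C + N * (N * η) := by
  have u1 : ∀ j, j ≤ N → a (N + 1) - a N - j * η ≤ a (N + j + 1) - a (N + j) := by
    intro j
    induction j with
    | zero => intro _; simp
    | succ j ih =>
      intro hj
      have := ih (by omega)
      have h2 := hc (N + j) (by omega)
      rw [show N + (j + 1) = N + j + 1 by ring]
      push_cast
      rw [show N + j + 1 + 1 = N + j + 2 by ring]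
      linarith
  have u2 : ∀ j, j ≤ N → j * (a (N + 1) - a N - N * η) ≤ a (N + j) - a N := by
    intro j
    induction j with
    | zero => intro _; simp
    | succ j ih =>
      intro hj
      have := ih (by omega)
      have h2 := u1 j (by omega)
      have h3 : (j : ℝ) ≤ N := by exact_mod_cast (by omega : j ≤ N)
      have h4 := mul_le_mul_of_nonneg_right h3 hη
      rw [show N + (j + 1) = N + j + 1 by ring]
      push_cast
      linarith
  have l1 : ∀ j i, i + j = N → a (i + 1) - a i ≤ a (N + 1) - a N + j * η := by
    intro j
    induction j with
    | zero => intro i hi; simp at hi; subst hi; simp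
    | succ j ih =>
      intro i hi
      have := ih (i + 1) (by omega)
      have h2 := hc i (by omega)
      push_cast
      rw [show i + 1 + 1 = i + 2 by ring] at this
      linarith
  have l2 : ∀ j i, i + j = N → a N - a i ≤ j * (a (N + 1) - a N + N * η) := by
    intro j
    induction j with
    | zero => intro i hi; simp at hi; subst hi; simp
    | succ j ih =>
      intro i hi
      have := ih (i + 1) (by omega)
      have h2 := l1 (j + 1) i hi
      have h3 : ((j + 1 : ℕ) : ℝ) ≤ N := by exact_mod_cast (by omega : j + 1 ≤ N)
      have h4 := mul_le_mul_of_nonneg_right h3 hη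
      push_cast at *
      linarith
  have p1 := u2 N le_rfl
  have p2 := l2 N 0 (by omega)
  have q0 := abs_le.1 (hC 0 (by omega))
  have q1 := abs_le.1 (hC N (by omega))
  have q2 := abs_le.1 (hC (N + N) (by omega))
  rcases abs_cases (a (N + 1) - a N) with ⟨h, _⟩ | ⟨h, _⟩ <;> rw [h] <;> nlinarith

lemma abs_tauber (ψ : ℝ → ℝ → ℝ) (C : ℝ) (hQ : ∀ b, ∀ᶠ x in atTop, |ψ b x| ≤ C)
    (hc : ∀ η > 0, ∀ b, ∀ᶠ x in atTop, -η ≤ ψ b x - 2 * ψ (b + 1) x + ψ (b + 2) x) (b : ℝ) :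
    Tendsto (fun x => ψ (b + 1) x - ψ b x) atTop (𝓝 0) := by
  rw [Metric.tendsto_nhds]
  intro ε hε
  obtain ⟨N, hN⟩ := exists_nat_gt (max 1 (8 * C / ε))
  have hN1 : (1:ℝ) < N := (le_max_left _ _).trans_lt hN
  have hN2 : 8 * C / ε < N := (le_max_right _ _).trans_lt hN
  have hη : 0 < ε / (4 * N) := by positivity
  have e1 : ∀ᶠ x in atTop, ∀ i ∈ Finset.range (2 * N + 1), |ψ (b - N + i) x| ≤ C :=
    (Filter.eventually_all_finset _).2 fun i _ => hQ _
  have e2 : ∀ᶠ x in atTop, ∀ i ∈ Finset.range (2 * N + 1),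
      -(ε / (4 * N)) ≤ ψ (b - N + i) x - 2 * ψ (b - N + i + 1) x + ψ (b - N + i + 2) x :=
    (Filter.eventually_all_finset _).2 fun i _ => hc _ hη _
  filter_upwards [e1, e2] with x h1 h2
  have := disc_convex (fun i => ψ (b - N + i) x) N C (ε / (4 * N)) hη.le
    (fun i hi => h1 i (Finset.mem_range.2 (by omega)))
    (fun i hi => by
      have := h2 i (Finset.mem_range.2 (by omega))
      push_cast
      rw [← add_assoc, ← add_assoc]
      exact this)
  push_cast at this
  rw [show b - N + ((N:ℝ) + 1) = b + 1 by ring, show b - N + (N:ℝ) = b by ring] at this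
  rw [Real.dist_eq, sub_zero]
  rw [div_lt_iff₀ hε] at hN2
  have h3 : (N:ℝ) * (ε / (4 * N)) = ε / 4 := by field_simp
  rw [h3] at this
  by_contra hcon
  push Not at hcon
  nlinarith

section base
variable {α : ℝ}

lemma mode_R (hα : 0 < α) (hα1 : α ≤ 1) {x : ℝ} (hx : 16 ≤ x) : ∃ m, x ≤ m ∧
    (∀ t, 0 < t → hh t x ≤ hh m x) ∧
    (∀ s t, 0 < s → s ≤ t → t ≤ m → hh s x ≤ hh t x) ∧
    (∀ s t, m ≤ s → s ≤ t → hh t x ≤ hh s x) ∧ hh m x ≤ 8 / √x * ff α 1 x := by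
  obtain ⟨m, h1, h2, h3, h4, h5⟩ := exists_mode (x := x) (by linarith)
  exact ⟨m, h1, h3, h4, h5, ff_lower hα hα1 one_pos hx (by linarith) h1 h2 h5⟩

lemma hh_small (hα : 0 < α) (hα1 : α ≤ 1) (t : ℝ) :
    Tendsto (fun x => √x * (hh t x / ff α 1 x)) atTop (𝓝 0) := by
  have key : ∀ n : ℕ, ∀ t : ℝ, 0 < t + n →
      Tendsto (fun x => √x * (hh t x / ff α 1 x)) atTop (𝓝 0) := by
    intro n
    induction n with
    | zero =>
      intro t ht
      simp only [Nat.cast_zero, add_zero] at ht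
      have h0 : Tendsto (fun x : ℝ => 8 * t / x) atTop (𝓝 0) := tendsto_const_nhds.div_atTop tendsto_id
      refine squeeze_zero' ?_ ?_ h0
      · filter_upwards [eventually_gt_atTop 0] with x hx
        have := hh_pos ht hx
        have := ff_pos hα one_pos hx
        positivity
      · filter_upwards [eventually_ge_atTop 16] with x hx
        have hx0 : 0 < x := by linarith
        obtain ⟨m, _, hmax, _, _, hR⟩ := mode_R hα hα1 hx
        have hRp := ff_pos hα one_pos hx0
        have e := hh_succ t hx0
        have h1 := (hmax (t + 1) (by linarith)).trans hR
        have hs : 0 < √x := Real.sqrt_pos.2 hx0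
        have e' : hh t x = t * hh (t + 1) x / x := by field_simp; linarith
        rw [e']
        calc √x * (t * hh (t + 1) x / x / ff α 1 x)
            ≤ √x * (t * (8 / √x * ff α 1 x) / x / ff α 1 x) := by gcongr
          _ = 8 * t / x := by field_simp
    | succ n ih =>
      intro t ht
      have h1 := ih (t + 1) (by push_cast at ht; linarith)
      have h0 : Tendsto (fun x : ℝ => t / x) atTop (𝓝 0) := tendsto_const_nhds.div_atTop tendsto_id
      have h2 := h0.mul h1
      rw [mul_zero] at h2
      refine h2.congr' ?_
      filter_upwards [eventually_gt_atTop 0] with x hx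
      have e := hh_succ t hx
      have e' : hh t x = t * hh (t + 1) x / x := by field_simp; linarith
      rw [e']; ring
  obtain ⟨n, hn⟩ := exists_nat_gt (-t)
  exact key n t (by linarith)

noncomputable def psi (α b x : ℝ) : ℝ := √x * (ff α b x / ff α 1 x - 1)

lemma psi_shift (hα : 0 < α) (hα1 : α ≤ 1) (b : ℝ) (n : ℕ) :
    Tendsto (fun x => psi α b x - psi α (b + n * α) x) atTop (𝓝 0) := by
  induction n with
  | zero => simp
  | succ n ih =>
    have h := ih.add (hh_small hα hα1 (b + n * α))
    rw [add_zero] at h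
    refine h.congr' ?_
    filter_upwards [eventually_gt_atTop 0] with x hx
    have := ff_step (b + n * α) hα hx
    unfold psi
    rw [show b + ((n + 1 : ℕ) : ℝ) * α = b + n * α + α by push_cast; ring, this]
    ring

lemma psi_bdd_one (hα : 0 < α) (hα1 : α ≤ 1) (b : ℝ) (hb : 1 ≤ b) :
    ∀ᶠ x in atTop, |psi α b x| ≤ 16 := by
  set n := ⌊(b - 1) / α⌋₊ with hn
  have hn1 : 1 + n * α ≤ b := by
    have := Nat.floor_le (a := (b - 1) / α) (div_nonneg (by linarith) hα.le)
    rw [← hn, le_div_iff₀ hα] at this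
    linarith
  have hn2 : b ≤ 1 + (n + 1) * α := by
    have := Nat.lt_floor_add_one ((b - 1) / α)
    rw [← hn, div_lt_iff₀ hα] at this
    linarith
  filter_upwards [eventually_ge_atTop 16, eventually_gt_atTop b,
    eventually_ge_atTop (((n:ℝ) + 1) * (1 + (n + 1) * α))] with x hx hxb hbig
  have hx0 : 0 < x := by linarith
  obtain ⟨m, hxm, hmax, hmono, hanti, hR⟩ := mode_R hα hα1 hx
  have hRp := ff_pos hα one_pos hx0
  have h1 := ff_close hα one_pos hx0 hb hn1 hn2 (by linarith) hbig hmax hmono hanti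
  have hs : 0 < √x := Real.sqrt_pos.2 hx0
  have e : psi α b x = √x * ((ff α b x - ff α 1 x) / ff α 1 x) := by
    unfold psi; field_simp
  rw [e, abs_mul, abs_div, abs_of_pos hs, abs_of_pos hRp]
  calc √x * (|ff α b x - ff α 1 x| / ff α 1 x) ≤ √x * (2 * (8 / √x * ff α 1 x) / ff α 1 x) := by
        gcongr; linarith
    _ = 16 := by field_simp; norm_num

lemma exists_shift (hα : 0 < α) (b : ℝ) : ∃ n : ℕ, 1 ≤ b + n * α := by
  obtain ⟨n, hn⟩ := exists_nat_gt ((1 - b) / α)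
  rw [div_lt_iff₀ hα] at hn
  exact ⟨n, by linarith⟩

lemma psi_bdd (hα : 0 < α) (hα1 : α ≤ 1) (b : ℝ) : ∀ᶠ x in atTop, |psi α b x| ≤ 17 := by
  obtain ⟨n, hn⟩ := exists_shift hα b
  have h := (Metric.tendsto_nhds.1 (psi_shift hα hα1 b n)) 1 one_pos
  filter_upwards [h, psi_bdd_one hα hα1 _ hn] with x h1 h2
  rw [Real.dist_eq, sub_zero] at h1
  have := abs_add_le (psi α b x - psi α (b + n * α) x) (psi α (b + n * α) x)
  rw [sub_add_cancel] at this
  linarith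

lemma ratio_one (hα : 0 < α) (hα1 : α ≤ 1) (b : ℝ) :
    Tendsto (fun x => ff α b x / ff α 1 x) atTop (𝓝 1) := by
  have h0 : Tendsto (fun x : ℝ => 17 / √x) atTop (𝓝 0) :=
    tendsto_const_nhds.div_atTop Real.tendsto_sqrt_atTop
  rw [tendsto_iff_norm_sub_tendsto_zero]
  refine squeeze_zero' (Eventually.of_forall fun x => norm_nonneg _) ?_ h0
  filter_upwards [psi_bdd hα hα1 b, eventually_gt_atTop 0] with x h hx
  have hs : 0 < √x := Real.sqrt_pos.2 hx
  unfold psi at h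
  rw [abs_mul, abs_of_pos hs] at h
  rw [Real.norm_eq_abs, le_div_iff₀ hs]
  linarith

lemma psi_convex (hα : 0 < α) (hα1 : α ≤ 1) (η : ℝ) (hη : 0 < η) (b : ℝ) :
    ∀ᶠ x in atTop, -η ≤ psi α b x - 2 * psi α (b + 1) x + psi α (b + 2) x := by
  obtain ⟨n, hn⟩ := exists_shift hα b
  have h0 := Metric.tendsto_nhds.1 (psi_shift hα hα1 b n) (η / 8) (by positivity)
  have h1 := Metric.tendsto_nhds.1 (psi_shift hα hα1 (b + 1) n) (η / 8) (by positivity)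
  have h2 := Metric.tendsto_nhds.1 (psi_shift hα hα1 (b + 2) n) (η / 8) (by positivity)
  have h3 := (ratio_one hα hα1 (b + n * α + 2)).eventually_lt_const (show (1:ℝ) < 2 by norm_num)
  have h4 : Tendsto (fun x : ℝ => 4 / √x) atTop (𝓝 0) :=
    tendsto_const_nhds.div_atTop Real.tendsto_sqrt_atTop
  have h5 := h4.eventually_lt_const (show 0 < η / 2 by positivity)
  filter_upwards [h0, h1, h2, h3, h5, eventually_gt_atTop 0] with x h0 h1 h2 h3 h5 hx
  rw [Real.dist_eq, sub_zero, abs_lt] at h0 h1 h2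
  have hc := ff_convex (b := b + n * α) hα (by linarith) hx
  have hs : 0 < √x := Real.sqrt_pos.2 hx
  have hRp := ff_pos hα one_pos hx
  rw [show b + 1 + n * α = b + n * α + 1 by ring] at h1
  rw [show b + 2 + n * α = b + n * α + 2 by ring] at h2
  generalize b + n * α = B at *
  have key : -(4 / √x) ≤ psi α B x - 2 * psi α (B + 1) x + psi α (B + 2) x := by
    have e : psi α B x - 2 * psi α (B + 1) x + psi α (B + 2) x =
      √x / ff α 1 x * (ff α B x - 2 * ff α (B + 1) x + ff α (B + 2) x) := by
      unfold psi; ring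
    rw [e]
    have h6 := mul_le_mul_of_nonneg_left hc (show 0 ≤ √x / ff α 1 x by positivity)
    refine le_trans ?_ h6
    have e2 : √x / ff α 1 x * (-(2 / x) * ff α (B + 2) x) =
        -(2 / √x * (ff α (B + 2) x / ff α 1 x)) := by
      have : 2 / x = 2 / √x / √x := by rw [div_div, Real.mul_self_sqrt hx.le]
      rw [this]; field_simp
    rw [e2, neg_le_neg_iff]
    have h7 := mul_le_mul_of_nonneg_left h3.le (show 0 ≤ 2 / √x by positivity)
    have e3 : 2 / √x * 2 = 4 / √x := by ring
    linarith
  linarith [h0.1, h0.2, h1.1, h1.2, h2.1, h2.2]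

lemma base_pos (hα : 0 < α) (hα1 : α ≤ 1) (b : ℝ) : ∀ᶠ x in atTop, 0 < ff α b x := by
  filter_upwards [(ratio_one hα hα1 b).eventually_const_lt (show (0:ℝ) < 1 by norm_num),
    eventually_gt_atTop 0] with x h hx
  have hRp := ff_pos hα one_pos hx
  exact (div_pos_iff_of_pos_right hRp).1 h

lemma base_lim (hα : 0 < α) (hα1 : α ≤ 1) (b : ℝ) :
    Tendsto (fun x => √x * (ff α (b - 1) x / ff α b x - 1)) atTop (𝓝 0) := by
  have h := abs_tauber (psi α) 17 (psi_bdd hα hα1) (psi_convex hα hα1) (b - 1)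
  have h2 := (h.neg).div (ratio_one hα hα1 b) one_ne_zero
  simp only [neg_zero, zero_div] at h2
  refine h2.congr' ?_
  filter_upwards [base_pos hα hα1 b, eventually_gt_atTop 0] with x hb hx
  have hRp := ff_pos hα one_pos hx
  simp only [sub_add_cancel, Pi.div_apply]
  unfold psi
  field_simp
  ring

end base

noncomputable def cc (γ : ℝ) (k : ℕ) : ℝ := Polynomial.eval γ (ascPochhammer ℝ k) / (k.factorial : ℝ)

lemma cc_one (k : ℕ) : cc 1 k = 1 := by
  unfold cc
  rw [ascPochhammer_eval_one]
  exact div_self (by positivity)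

lemma cc_up (n k : ℕ) : (n : ℝ) * cc ((n : ℝ) + 1) k = (n + k) * cc n k := by
  unfold cc
  rw [mul_div_assoc', ascPochhammer_eval_succ, mul_div_assoc]

lemma cc_next (γ : ℝ) (k : ℕ) : ((k : ℝ) + 1) * cc γ (k + 1) = (γ + k) * cc γ k := by
  unfold cc
  rw [ascPochhammer_succ_eval, Nat.factorial_succ]
  push_cast
  field_simp

noncomputable def UU (α γ b x : ℝ) : ℝ := ∑' k : ℕ, cc γ k * hh (α * k + b) x

lemma hh_pred (t : ℝ) {x : ℝ} (hx : 0 < x) : (t - 1) * hh t x = x * hh (t - 1) x := by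
  have := hh_succ (t - 1) hx
  rwa [sub_add_cancel] at this

lemma up_term (α b : ℝ) (n k : ℕ) {x : ℝ} (hx : 0 < x) :
    (n * α) * (cc ((n : ℝ) + 1) k * hh (α * k + b) x) =
      x * (cc n k * hh (α * k + (b - 1)) x) + (1 - b + α * n) * (cc n k * hh (α * k + b) x) := by
  have h1 := cc_up n k
  have h2 := hh_pred (α * k + b) hx
  rw [add_sub_assoc] at h2
  calc _ = α * (n * cc ((n : ℝ) + 1) k) * hh (α * k + b) x := by ring
    _ = cc n k * ((α * k + (b - 1)) * hh (α * k + b) x)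
        + (1 - b + α * n) * (cc n k * hh (α * k + b) x) := by rw [h1]; ring
    _ = _ := by rw [h2]; ring

lemma summable_UU {α x : ℝ} (hα : 0 < α) (hx : 0 < x) (n : ℕ) (hn : 1 ≤ n) :
    ∀ b, Summable (fun k : ℕ => cc n k * hh (α * k + b) x) := by
  induction n, hn using Nat.le_induction with
  | base => intro b; simpa [cc_one] using summable_hh b hα hx
  | succ n hn ih =>
    intro b
    have hn0 : (0:ℝ) < n := by exact_mod_cast hn
    have h := ((ih (b - 1)).mul_left x).add ((ih b).mul_left (1 - b + α * n))
    have h2 := h.mul_left (n * α)⁻¹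
    refine h2.congr fun k => ?_
    rw [← up_term α b n k hx]
    push_cast
    field_simp

lemma UU_up {α x : ℝ} (hα : 0 < α) (hx : 0 < x) (n : ℕ) (hn : 1 ≤ n) (b : ℝ) :
    (n * α) * UU α ((n : ℝ) + 1) b x = x * UU α n (b - 1) x + (1 - b + α * n) * UU α n b x := by
  unfold UU
  rw [← tsum_mul_left, ← tsum_mul_left, ← tsum_mul_left,
    ← ((summable_UU hα hx n hn _).mul_left _).tsum_add ((summable_UU hα hx n hn _).mul_left _)]
  exact tsum_congr fun k => up_term α b n k hx

lemma UU_shift {α x : ℝ} (hα : 0 < α) (hx : 0 < x) (n : ℕ) (hn : 1 ≤ n) (b : ℝ) :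
    α * ∑' k : ℕ, (n : ℝ) * (cc ((n : ℝ) + 1) k * hh (α * k + (α + b)) x) =
      x * UU α n (b - 1) x + (1 - b) * UU α n b x := by
  have s1 := summable_UU hα hx n hn (b - 1)
  have s0 := summable_UU hα hx n hn b
  have e : ∀ k : ℕ, α * (k * (cc n k * hh (α * k + b) x)) =
      x * (cc n k * hh (α * k + (b - 1)) x) + (1 - b) * (cc n k * hh (α * k + b) x) := by
    intro k
    have h2 := hh_pred (α * k + b) hx
    rw [add_sub_assoc] at h2
    calc _ = cc n k * ((α * k + (b - 1)) * hh (α * k + b) x)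
        + (1 - b) * (cc n k * hh (α * k + b) x) := by ring
      _ = _ := by rw [h2]; ring
  have s2 : Summable (fun k : ℕ => α * (k * (cc n k * hh (α * k + b) x))) := by
    refine ((s1.mul_left x).add (s0.mul_left (1 - b))).congr fun k => (e k).symm
  unfold UU
  rw [← tsum_mul_left, ← tsum_mul_left, ← tsum_mul_left,
    ← (s1.mul_left x).tsum_add (s0.mul_left (1 - b)), ← tsum_congr e, s2.tsum_eq_zero_add]
  simp only [Nat.cast_zero, zero_mul, mul_zero, zero_add]
  refine tsum_congr fun k => ?_
  have h1 := cc_up n k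
  rw [← cc_next] at h1
  have : α * ((k + 1 : ℕ) : ℝ) + b = α * k + (α + b) := by push_cast; ring
  rw [this, ← mul_assoc (n : ℝ), h1]
  push_cast
  ring

lemma UU_main {α : ℝ} (hα : 0 < α) (hα1 : α ≤ 1) (n : ℕ) (hn : 1 ≤ n) :
    ∀ b, (∀ᶠ x in atTop, 0 < UU α n b x) ∧
      Tendsto (fun x => √x * (UU α n (b - 1) x / UU α n b x - 1)) atTop (𝓝 0) := by
  induction n, hn using Nat.le_induction with
  | base =>
    have e : ∀ b x, UU α (1 : ℕ) b x = ff α b x := by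
      intro b x; simp [UU, ff, cc_one]
    intro b
    simp only [e]
    exact ⟨base_pos hα hα1 b, base_lim hα hα1 b⟩
  | succ n hn ih =>
    have hn0 : (0:ℝ) < n := by exact_mod_cast hn
    have hsq : Tendsto (fun x : ℝ => 1 / √x) atTop (𝓝 0) :=
      tendsto_const_nhds.div_atTop Real.tendsto_sqrt_atTop
    have hxi : Tendsto (fun x : ℝ => 1 / x) atTop (𝓝 0) :=
      tendsto_const_nhds.div_atTop tendsto_id
    have hr : ∀ b, Tendsto (fun x => UU α n (b - 1) x / UU α n b x) atTop (𝓝 1) := by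
      intro b
      have h := ((ih b).2.mul hsq).add_const 1
      simp only [mul_zero, zero_add] at h
      refine h.congr' ?_
      filter_upwards [eventually_gt_atTop 0] with x hx
      have hs : 0 < √x := Real.sqrt_pos.2 hx
      field_simp
      ring
    have hD : ∀ b, Tendsto (fun x => UU α n (b - 1) x / UU α n b x + (1 - b + α * n) * (1 / x))
        atTop (𝓝 1) := by
      intro b
      have := (hr b).add (hxi.const_mul (1 - b + α * n))
      simpa using this
    have hU : ∀ b x, 0 < x → 0 < UU α n b x → UU α (n + 1 : ℕ) b x = x / (n * α) * UU α n b x *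
        (UU α n (b - 1) x / UU α n b x + (1 - b + α * n) * (1 / x)) := by
      intro b x hx hp
      have := UU_up hα hx n hn b
      push_cast
      field_simp
      linarith
    intro b
    constructor
    · filter_upwards [(ih b).1, (hD b).eventually_const_lt (show (0:ℝ) < 1 by norm_num),
        eventually_gt_atTop 0] with x h1 h2 hx
      rw [hU b x hx h1]
      positivity
    · have hnum : Tendsto (fun x => (UU α n (b - 1) x / UU α n b x) *
          (√x * (UU α n (b - 1 - 1) x / UU α n (b - 1) x - 1)) +
          ((UU α n (b - 1) x / UU α n b x) * (1 - (b - 1) + α * n) - (1 - b + α * n)) * (1 / √x))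
          atTop (𝓝 0) := by
        have := ((hr b).mul (ih (b - 1)).2).add
          ((((hr b).mul_const (1 - (b - 1) + α * n)).sub_const (1 - b + α * n)).mul hsq)
        simpa using this
      have h := hnum.div (hD b) one_ne_zero
      rw [zero_div] at h
      refine h.congr' ?_
      filter_upwards [(ih b).1, (ih (b - 1)).1,
        (hD b).eventually_const_lt (show (0:ℝ) < 1 by norm_num),
        eventually_gt_atTop 0] with x h1 h1' h2 hx
      simp only [Pi.div_apply]
      rw [hU b x hx h1, hU (b - 1) x hx h1', div_eq_iff h2.ne']
      have hs : 0 < √x := Real.sqrt_pos.2 hx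
      have e1 : x / (n * α) * UU α n (b - 1) x *
          (UU α n (b - 1 - 1) x / UU α n (b - 1) x + (1 - (b - 1) + α * n) * (1 / x)) /
          (x / (n * α) * UU α n b x *
          (UU α n (b - 1) x / UU α n b x + (1 - b + α * n) * (1 / x))) =
          (UU α n (b - 1) x / UU α n b x) *
          (UU α n (b - 1 - 1) x / UU α n (b - 1) x + (1 - (b - 1) + α * n) * (1 / x)) /
          (UU α n (b - 1) x / UU α n b x + (1 - b + α * n) * (1 / x)) := by
        rw [mul_div_mul_comm, mul_div_mul_left _ _ (by positivity), mul_div_assoc]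
      rw [e1]
      have e2 : 1 / x = 1 / √x * (1 / √x) := by
        rw [div_mul_div_comm, Real.mul_self_sqrt hx.le, one_mul]
      have e3 : √x * (1 / √x) = 1 := by field_simp
      rw [mul_assoc (√x), div_sub_one h2.ne', div_mul_cancel₀ _ h2.ne', e2]
      generalize UU α n (b - 1) x / UU α n b x = r
      generalize UU α n (b - 1 - 1) x / UU α n (b - 1) x = r'
      generalize 1 / √x = y at *
      linear_combination (-(r * (1 - (b - 1) + α * n) - (1 - b + α * n)) * y) * e3

lemma prab_eq {α b γ x u : ℝ} (hα : 0 < α) (hu : 0 < u) (hx : x = u ^ (1 / α)) :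
    prabhakar α b γ u = x ^ (1 - b) * ∑' k : ℕ, cc γ k * hh (α * k + b) x := by
  have hx0 : 0 < x := hx ▸ Real.rpow_pos_of_pos hu _
  unfold prabhakar
  rw [← tsum_mul_left]
  refine tsum_congr fun k => ?_
  have e : u ^ k = x ^ (1 - b) * x ^ (α * k + b - 1) := by
    rw [← Real.rpow_add hx0, hx, ← Real.rpow_mul hu.le, ← Real.rpow_natCast]
    congr 1; field_simp; ring
  unfold cc hh
  rw [e]; ring
theorem H2_limit_prabhakar
    (α β lam : ℝ) (γ : ℕ)
    (hα : α ∈ Set.Ioc (0 : ℝ) 1) (hβ : 0 < β) (hlam : 0 < lam) (hγ : 1 ≤ γ) :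
    Tendsto (fun s : ℝ => s ^ (1 / (2 * α)) *
        (lam ^ (1 / α) / α - s ^ (1 - 1 / α) * lam * (γ : ℝ) *
          prabhakar α (α + β) ((γ : ℝ) + 1) (lam * s) / prabhakar α β (γ : ℝ) (lam * s)))
      atTop (𝓝 0) := by
  obtain ⟨hα0, hα1⟩ := hα
  have hX : Tendsto (fun s : ℝ => (lam * s) ^ (1 / α)) atTop atTop :=
    (tendsto_rpow_atTop (by positivity)).comp (tendsto_id.const_mul_atTop hlam)
  obtain ⟨hpos, hlim⟩ := UU_main hα0 hα1 γ hγ β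
  have hsq : Tendsto (fun x : ℝ => (1 - β) / √x) atTop (𝓝 0) :=
    tendsto_const_nhds.div_atTop Real.tendsto_sqrt_atTop
  have h := ((hlim.add hsq).const_mul (-(lam ^ (1 / (2 * α)) / α))).comp hX
  rw [add_zero, mul_zero] at h
  refine h.congr' ?_
  filter_upwards [eventually_gt_atTop 0, hX.eventually hpos] with s hs hU
  simp only [Function.comp]
  have hu : 0 < lam * s := mul_pos hlam hs
  obtain ⟨x, hx⟩ : ∃ x, x = (lam * s) ^ (1 / α) := ⟨_, rfl⟩
  rw [← hx] at hU ⊢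
  have hx0 : 0 < x := hx ▸ Real.rpow_pos_of_pos hu _
  have hsh := UU_shift hα0 hx0 γ hγ β
  rw [tsum_mul_left] at hsh
  rw [prab_eq (b := α + β) hα0 hu hx, prab_eq (b := β) hα0 hu hx]
  change 0 < ∑' k : ℕ, cc γ k * hh (α * k + β) x at hU
  unfold UU at hsh ⊢
  set V := ∑' k : ℕ, cc ((γ : ℝ) + 1) k * hh (α * k + (α + β)) x
  set U := ∑' k : ℕ, cc (γ : ℝ) k * hh (α * k + β) x
  set W := ∑' k : ℕ, cc (γ : ℝ) k * hh (α * k + (β - 1)) x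
  have e1 : x ^ (1 - (α + β)) = x ^ (1 - β) / (lam * s) := by
    rw [show 1 - (α + β) = (1 - β) - α by ring, Real.rpow_sub hx0]
    congr 1
    rw [hx, ← Real.rpow_mul hu.le, one_div_mul_cancel hα0.ne', Real.rpow_one]
  have hq : 0 < x ^ (1 - β) := Real.rpow_pos_of_pos hx0 _
  have hγ0 : (0:ℝ) < γ := by exact_mod_cast hγ
  have e2 : s ^ (1 - 1 / α) = s / s ^ (1 / α) := by rw [Real.rpow_sub hs, Real.rpow_one]
  have e3 : x = lam ^ (1 / α) * s ^ (1 / α) := by rw [hx, Real.mul_rpow hlam.le hs.le]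
  have half : ∀ y : ℝ, 0 < y → y ^ (1 / α) = y ^ (1 / (2 * α)) * y ^ (1 / (2 * α)) := by
    intro y hy
    rw [← Real.rpow_add hy]; congr 1; field_simp; norm_num
  have hlp : 0 < lam ^ (1 / (2 * α)) := Real.rpow_pos_of_pos hlam _
  have hsp : 0 < s ^ (1 / (2 * α)) := Real.rpow_pos_of_pos hs _
  rw [half lam hlam, half s hs] at e3
  rw [e1, e2, half lam hlam, half s hs]
  have hVe : V = (x * W + (1 - β) * U) / (α * γ) := by
    field_simp; linarith
  generalize lam ^ (1 / (2 * α)) = l at *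
  generalize s ^ (1 / (2 * α)) = z at *
  have e4 : √x = l * z := by
    rw [e3, show l * l * (z * z) = (l * z) ^ 2 by ring, Real.sqrt_sq (by positivity)]
  rw [hVe, e4, e3]
  field_simp
  ring
end

section
/- Let λ > 0, d_0, d_{0,0} > 0, and α, α_0, α̃, α̃_0 ∈ (0,1] with α̃/α > α̃_0/α_0. Define R_1(t) := d_{0,0}/E^1_{α_0,1}(λ t^{α̃_0}) − d_0/E^1_{α,1}(λ t^{α̃}). Then R_1(t) > 0 for all sufficiently large t, lim_{t→∞} R_1(t) = 0, and lim_{t→∞} t^{−α̃/α} log R_1(t) = 0. -/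
open Filter Topology

/-- The classical Mittag-Leffler function `E^1_{α,1}(u) = ∑_{k≥0} u^k / Γ(αk+1)`. -/
noncomputable def mittagLeffler (α : ℝ) (u : ℝ) : ℝ :=
  ∑' k : ℕ, u ^ k / Real.Gamma (α * (k : ℝ) + 1)

theorem ml_gamma_lower (s w : ℝ) (hs : 0 ≤ s) (hw : 0 < w) :
    w ^ s * Real.exp (-w) ≤ Real.Gamma (s + 1) := by
  rw [Real.Gamma_eq_integral (by linarith)]
  have hint := Real.GammaIntegral_convergent (s := s + 1) (by linarith)
  have hsub : Set.Ioi w ⊆ Set.Ioi (0 : ℝ) := Set.Ioi_subset_Ioi hw.le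
  calc w ^ s * Real.exp (-w) = ∫ x in Set.Ioi w, w ^ s * Real.exp (-x) := by
        rw [MeasureTheory.integral_const_mul, integral_exp_neg_Ioi]
    _ ≤ ∫ x in Set.Ioi w, Real.exp (-x) * x ^ (s + 1 - 1) := by
        apply MeasureTheory.setIntegral_mono_on
        · exact (integrableOn_exp_neg_Ioi w).const_mul _
        · exact hint.mono_set hsub
        · exact measurableSet_Ioi
        · intro x hx
          have hx' : w < x := hx
          rw [mul_comm, add_sub_cancel_right]
          have := Real.rpow_le_rpow hw.le hx'.le hs
          gcongr
    _ ≤ ∫ x in Set.Ioi (0 : ℝ), Real.exp (-x) * x ^ (s + 1 - 1) := by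
        apply MeasureTheory.setIntegral_mono_set hint
        · filter_upwards [MeasureTheory.ae_restrict_mem measurableSet_Ioi] with x hx
          have hx' : 0 < x := hx
          simp only [Pi.zero_apply]
          positivity
        · exact hsub.eventuallyLE

theorem ml_term_nonneg (α v : ℝ) (hα : 0 < α) (hv : 0 < v) (k : ℕ) :
    0 ≤ (v ^ α) ^ k / Real.Gamma (α * (k : ℝ) + 1) := by
  have : 0 < Real.Gamma (α * (k : ℝ) + 1) := Real.Gamma_pos_of_pos (by positivity)
  positivity

theorem ml_term_upper (α v : ℝ) (hα : 0 < α) (hv : 0 < v) (k : ℕ) :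
    (v ^ α) ^ k / Real.Gamma (α * (k : ℝ) + 1)
      ≤ (1 / 2) ^ k * Real.exp ((2 : ℝ) ^ (1 / α) * v) := by
  set w := (2 : ℝ) ^ (1 / α) * v with hw
  have hwpos : 0 < w := by positivity
  have h := ml_gamma_lower (α * k) w (by positivity) hwpos
  have hG : 0 < Real.Gamma (α * (k : ℝ) + 1) := Real.Gamma_pos_of_pos (by positivity)
  have hwα : w ^ α = 2 * v ^ α := by
    rw [hw, Real.mul_rpow (by positivity) hv.le, ← Real.rpow_mul (by norm_num)]
    rw [one_div_mul_cancel hα.ne', Real.rpow_one]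
  rw [Real.rpow_mul hwpos.le, Real.rpow_natCast, hwα, mul_pow] at h
  rw [div_le_iff₀ hG]
  calc (v ^ α) ^ k = (1 / 2) ^ k * Real.exp w * (2 ^ k * (v ^ α) ^ k * Real.exp (-w)) := by
        rw [Real.exp_neg, one_div, inv_pow]
        field_simp
    _ ≤ _ := by gcongr

theorem ml_summable (α v : ℝ) (hα : 0 < α) (hv : 0 < v) :
    Summable (fun k : ℕ => (v ^ α) ^ k / Real.Gamma (α * (k : ℝ) + 1)) :=
  Summable.of_nonneg_of_le (ml_term_nonneg α v hα hv) (ml_term_upper α v hα hv)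
    (summable_geometric_two.mul_right _)

theorem ml_upper (α v : ℝ) (hα : 0 < α) (hv : 0 < v) :
    mittagLeffler α (v ^ α) ≤ 2 * Real.exp ((2 : ℝ) ^ (1 / α) * v) := by
  unfold mittagLeffler
  refine ((ml_summable α v hα hv).tsum_le_tsum (ml_term_upper α v hα hv)
    (summable_geometric_two.mul_right _)).trans ?_
  rw [tsum_mul_right, tsum_geometric_two]

theorem ml_lower (α v : ℝ) (hα : α ∈ Set.Ioc (0 : ℝ) 1) (hv : 1 ≤ v) :
    Real.exp (v / 2) ≤ mittagLeffler α (v ^ α) := by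
  obtain ⟨ha, ha1⟩ := hα
  have hv0 : 0 < v := by linarith
  unfold mittagLeffler
  have hexp : HasSum (fun n : ℕ => (v / 2) ^ n / (n.factorial : ℝ)) (Real.exp (v / 2)) := by
    rw [Real.exp_eq_exp_ℝ]
    exact NormedSpace.expSeries_div_hasSum_exp (v / 2)
  have hle : ∀ n : ℕ, (n : ℝ) / α ≤ (⌈(n : ℝ) / α⌉₊ : ℝ) := fun n => Nat.le_ceil _
  have hlt : ∀ n : ℕ, (⌈(n : ℝ) / α⌉₊ : ℝ) < (n : ℝ) / α + 1 :=
    fun n => Nat.ceil_lt_add_one (by positivity)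
  have hmono : StrictMono (fun n : ℕ => ⌈(n : ℝ) / α⌉₊) := by
    apply strictMono_nat_of_lt_succ
    intro n
    have h1 := hlt n
    have h2 := hle (n + 1)
    have h3 : (n : ℝ) / α + 1 ≤ ((n + 1 : ℕ) : ℝ) / α := by
      push_cast
      rw [add_div]
      have := (one_le_div ha).2 ha1
      linarith
    exact_mod_cast h1.trans_le (h3.trans h2)
  refine hasSum_le_inj (fun n : ℕ => ⌈(n : ℝ) / α⌉₊) hmono.injective
    (fun c _ => ml_term_nonneg α v ha hv0 c) ?_ hexp (ml_summable α v ha hv0).hasSum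
  intro n
  rcases Nat.eq_zero_or_pos n with rfl | hn
  · simp
  have hkl : (n : ℝ) ≤ α * (⌈(n : ℝ) / α⌉₊ : ℝ) := by
    have := hle n
    rwa [div_le_iff₀' ha] at this
  have hku : α * (⌈(n : ℝ) / α⌉₊ : ℝ) ≤ n + 1 := by
    have h := mul_le_mul_of_nonneg_left (hlt n).le ha.le
    rw [mul_add, mul_div_cancel₀ _ ha.ne'] at h
    linarith
  set k := ⌈(n : ℝ) / α⌉₊
  have hn1 : (1 : ℝ) ≤ n := by exact_mod_cast hn
  have hG : 0 < Real.Gamma (α * (k : ℝ) + 1) := Real.Gamma_pos_of_pos (by positivity)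
  have hGle : Real.Gamma (α * (k : ℝ) + 1) ≤ 2 ^ n * (n.factorial : ℝ) := by
    have h1 : Real.Gamma (α * (k : ℝ) + 1) ≤ Real.Gamma (((n + 1 : ℕ) : ℝ) + 1) := by
      apply Real.Gamma_strictMonoOn_Ici.monotoneOn
      · simp only [Set.mem_Ici]; linarith
      · simp only [Set.mem_Ici]; push_cast; linarith
      · push_cast; linarith
    rw [Real.Gamma_nat_eq_factorial, Nat.factorial_succ] at h1
    refine h1.trans ?_
    have : n + 1 ≤ 2 ^ n := Nat.lt_two_pow_self
    exact_mod_cast Nat.mul_le_mul_right _ this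
  have hvk : v ^ n ≤ (v ^ α) ^ k := by
    rw [← Real.rpow_natCast (v ^ α) k, ← Real.rpow_mul hv0.le, ← Real.rpow_natCast v n]
    exact Real.rpow_le_rpow_of_exponent_le hv hkl
  rw [div_pow, div_div]
  gcongr

theorem ml_arg (lam α αt t : ℝ) (hlam : 0 < lam) (hα : 0 < α) (ht : 0 < t) :
    lam * t ^ αt = (lam ^ (1 / α) * t ^ (αt / α)) ^ α := by
  rw [Real.mul_rpow (by positivity) (by positivity), ← Real.rpow_mul hlam.le,
    ← Real.rpow_mul ht.le, one_div_mul_cancel hα.ne', div_mul_cancel₀ _ hα.ne', Real.rpow_one]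

/-- Section 4.2.2 of the paper, analysis of `R_1(t)`: for `λ > 0`, `d_0, d_{0,0} > 0` and
`α, α_0, α̃, α̃_0 ∈ (0,1]` with `α̃/α > α̃_0/α_0`, setting
`R_1(t) = d_{0,0}/E^1_{α_0,1}(λt^{α̃_0}) - d_0/E^1_{α,1}(λt^{α̃})`, one has `R_1(t) > 0`
eventually, `R_1(t) → 0`, and `t^{-α̃/α} log R_1(t) → 0`. -/
theorem R1_analysis
    (lam d0 d00 α α0 αt αt0 : ℝ)
    (hlam : 0 < lam) (hd0 : 0 < d0) (hd00 : 0 < d00)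
    (hα : α ∈ Set.Ioc (0 : ℝ) 1) (hα0 : α0 ∈ Set.Ioc (0 : ℝ) 1)
    (hαt : αt ∈ Set.Ioc (0 : ℝ) 1) (hαt0 : αt0 ∈ Set.Ioc (0 : ℝ) 1)
    (hcase : αt0 / α0 < αt / α) :
    (∀ᶠ t : ℝ in atTop,
      0 < d00 / mittagLeffler α0 (lam * t ^ αt0) - d0 / mittagLeffler α (lam * t ^ αt)) ∧
    Tendsto (fun t : ℝ =>
        d00 / mittagLeffler α0 (lam * t ^ αt0) - d0 / mittagLeffler α (lam * t ^ αt))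
      atTop (𝓝 0) ∧
    Tendsto (fun t : ℝ => t ^ (-(αt / α)) *
        Real.log (d00 / mittagLeffler α0 (lam * t ^ αt0) - d0 / mittagLeffler α (lam * t ^ αt)))
      atTop (𝓝 0) := by
  have ha := hα.1
  have ha0 := hα0.1
  set p := αt0 / α0 with hp
  set q := αt / α with hq
  have hp0 : 0 < p := div_pos hαt0.1 ha0
  have hq0 : 0 < q := hp0.trans hcase
  set A := fun t : ℝ => mittagLeffler α0 (lam * t ^ αt0) with hA
  set B := fun t : ℝ => mittagLeffler α (lam * t ^ αt) with hB
  obtain ⟨a, ha', hAl⟩ : ∃ a : ℝ, 0 < a ∧ ∀ᶠ t : ℝ in atTop, Real.exp (a * t ^ p) ≤ A t := by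
    refine ⟨lam ^ (1 / α0) / 2, by positivity, ?_⟩
    have hT := (tendsto_rpow_atTop hp0).const_mul_atTop (show 0 < lam ^ (1 / α0) by positivity)
    filter_upwards [hT.eventually_ge_atTop 1, eventually_gt_atTop 0] with t h1 h2
    have := ml_lower α0 _ hα0 h1
    rw [← ml_arg lam α0 αt0 t hlam ha0 h2] at this
    rwa [div_mul_eq_mul_div]
  obtain ⟨b, hb', hBl⟩ : ∃ a : ℝ, 0 < a ∧ ∀ᶠ t : ℝ in atTop, Real.exp (a * t ^ q) ≤ B t := by
    refine ⟨lam ^ (1 / α) / 2, by positivity, ?_⟩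
    have hT := (tendsto_rpow_atTop hq0).const_mul_atTop (show 0 < lam ^ (1 / α) by positivity)
    filter_upwards [hT.eventually_ge_atTop 1, eventually_gt_atTop 0] with t h1 h2
    have := ml_lower α _ hα h1
    rw [← ml_arg lam α αt t hlam ha h2] at this
    rwa [div_mul_eq_mul_div]
  obtain ⟨c, hAu⟩ : ∃ c : ℝ, ∀ᶠ t : ℝ in atTop, A t ≤ 2 * Real.exp (c * t ^ p) := by
    refine ⟨(2 : ℝ) ^ (1 / α0) * lam ^ (1 / α0), ?_⟩
    filter_upwards [eventually_gt_atTop 0] with t h2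
    have := ml_upper α0 (lam ^ (1 / α0) * t ^ p) ha0 (by positivity)
    rw [← ml_arg lam α0 αt0 t hlam ha0 h2] at this
    rwa [mul_assoc]
  have hpq : Tendsto (fun t : ℝ => t ^ (-q) * t ^ p) atTop (𝓝 0) := by
    have := tendsto_rpow_neg_atTop (sub_pos.2 hcase)
    refine this.congr' ?_
    filter_upwards [eventually_gt_atTop 0] with t ht
    rw [← Real.rpow_add ht]
    congr 1; ring
  have hq' : Tendsto (fun t : ℝ => t ^ (-q)) atTop (𝓝 0) := tendsto_rpow_neg_atTop hq0
  -- the second term is at most half of the first one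
  have hhalf : ∀ᶠ t : ℝ in atTop, d0 / B t ≤ d00 / A t / 2 := by
    have hlim : Tendsto (fun t : ℝ => Real.log (4 * d0 / d00) * t ^ (-q) + c * (t ^ (-q) * t ^ p))
        atTop (𝓝 0) := by
      simpa using (hq'.const_mul (Real.log (4 * d0 / d00))).add (hpq.const_mul c)
    filter_upwards [hlim.eventually (gt_mem_nhds hb'), hAl, hBl, hAu, eventually_gt_atTop 0]
      with t h1 h2 h3 h4 ht
    have hAp : 0 < A t := (Real.exp_pos _).trans_le h2
    have hBp : 0 < B t := (Real.exp_pos _).trans_le h3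
    have h5 : Real.log (4 * d0 / d00) + c * t ^ p ≤ b * t ^ q := by
      have h6 := mul_le_mul_of_nonneg_right h1.le (Real.rpow_pos_of_pos ht q).le
      have h7 : t ^ (-q) * t ^ q = 1 := by
        rw [← Real.rpow_add ht]; simp
      calc _ = (Real.log (4 * d0 / d00) + c * t ^ p) * (t ^ (-q) * t ^ q) := by
            rw [h7, mul_one]
        _ = _ := by ring
        _ ≤ _ := h6
    have h8 := Real.exp_le_exp.2 h5
    rw [Real.exp_add, Real.exp_log (by positivity)] at h8
    have h9 : 2 * d0 / d00 * A t ≤ B t := by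
      calc 2 * d0 / d00 * A t ≤ 2 * d0 / d00 * (2 * Real.exp (c * t ^ p)) := by gcongr
        _ = 4 * d0 / d00 * Real.exp (c * t ^ p) := by ring
        _ ≤ _ := h8.trans h3
    rw [div_div, div_le_div_iff₀ hBp (by positivity)]
    calc d0 * (A t * 2) = d00 * (2 * d0 / d00 * A t) := by field_simp
      _ ≤ _ := by gcongr
  have hbd : ∀ᶠ t : ℝ in atTop, 0 < A t ∧ 0 < B t := by
    filter_upwards [hAl, hBl] with t h2 h3
    exact ⟨(Real.exp_pos _).trans_le h2, (Real.exp_pos _).trans_le h3⟩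
  have hpos : ∀ᶠ t : ℝ in atTop, 0 < d00 / A t - d0 / B t := by
    filter_upwards [hhalf, hbd] with t h1 h2
    have := div_pos hd00 h2.1
    linarith
  have hAinf : Tendsto A atTop atTop :=
    tendsto_atTop_mono' _ hAl
      (Real.tendsto_exp_atTop.comp ((tendsto_rpow_atTop hp0).const_mul_atTop ha'))
  refine ⟨hpos, ?_, ?_⟩
  · refine tendsto_of_tendsto_of_tendsto_of_le_of_le' tendsto_const_nhds
      (hAinf.const_div_atTop d00) (hpos.mono fun t h => h.le) ?_
    filter_upwards [hbd] with t h
    have := div_pos hd0 h.2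
    show d00 / A t - d0 / B t ≤ d00 / A t
    linarith
  · have hlo : Tendsto (fun t : ℝ => Real.log (d00 / 4) * t ^ (-q) + (-c) * (t ^ (-q) * t ^ p))
        atTop (𝓝 0) := by
      simpa using (hq'.const_mul (Real.log (d00 / 4))).add (hpq.const_mul (-c))
    have hup : Tendsto (fun t : ℝ => t ^ (-q) * Real.log d00) atTop (𝓝 0) := by
      simpa using hq'.mul_const (Real.log d00)
    refine tendsto_of_tendsto_of_tendsto_of_le_of_le' hlo hup ?_ ?_
    · filter_upwards [hhalf, hbd, hAu, eventually_gt_atTop 0] with t h1 h2 h3 ht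
      have h4 : d00 / 4 * Real.exp (-c * t ^ p) ≤ d00 / A t - d0 / B t := by
        calc d00 / 4 * Real.exp (-c * t ^ p) = d00 / (2 * Real.exp (c * t ^ p)) / 2 := by
              rw [neg_mul, Real.exp_neg]; field_simp; norm_num
          _ ≤ d00 / A t / 2 := by
              have := h2.1
              gcongr
          _ ≤ _ := by linarith
      have h5 := Real.log_le_log (by positivity) h4
      rw [Real.log_mul (by positivity) (by positivity), Real.log_exp] at h5
      have h6 := mul_le_mul_of_nonneg_left h5 (Real.rpow_pos_of_pos ht (-q)).le
      refine le_trans (le_of_eq ?_) h6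
      ring
    · filter_upwards [hpos, hbd, hAinf.eventually_ge_atTop 1, eventually_gt_atTop 0]
        with t h1 h2 h3 ht
      have h4 : d00 / A t - d0 / B t ≤ d00 := by
        have := div_pos hd0 h2.2
        have := div_le_self hd00.le h3
        linarith
      exact mul_le_mul_of_nonneg_left (Real.log_le_log h1 h4) (Real.rpow_pos_of_pos ht (-q)).le
end
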